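/- arXiv:2307.07257 — 3 statements merged into one kernel-verified Lean document; each statement's English description precedes it below -/
import Mathlib

section
/- Let σ > 0, γ ≥ 2 and 0 ≤ s < τ. Assume each X_i is divergence-free and δ-homogeneous of degree one. Let F : [s,τ]×ℝ^d → ℝ be continuous and bounded. Let u : [s,τ]×ℝ^d → ℝ be continuous with u(t,·) ∈ C²(ℝ^d) for each t, with ∂_t u existing on (s,τ)×ℝ^d and u, X_i u, X_i X_j u, ∂_t u continuous in (t,x) and u, X_i u, X_i X_j u bounded on [s,τ]×ℝ^d, satisfying the Hamilton–Jacobi equation ∂_t u − σ Δ_G u + |∇_G u|^γ = F pointwise on (s,τ)×ℝ^d. Let μ : [s,τ]×ℝ^d → [0,∞) be continuous with μ(t,·) ∈ C²(ℝ^d) for each t, with ∂_t μ existing on (s,τ)×ℝ^d and μ, X_iμ, X_iX_jμ, ∂_tμ continuous in (t,x), with sup over t ∈ [s,τ] of ∫_{ℝ^d} (μ(t,x) + |∇_G μ(t,x)|) dx finite, and satisfying the Fokker–Planck equation −∂_t μ − σ Δ_G μ − div_G(γ |∇_G u|^{γ−2} ∇_G u · μ) = 0 pointwise on (s,τ)×ℝ^d.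 Then the duality identity holds: ∫_{ℝ^d} u(τ,x) μ(τ,x) dx = ∫_{ℝ^d} u(s,x) μ(s,x) dx + ∫_s^τ ∫_{ℝ^d} (γ−1) |∇_G u(t,x)|^γ μ(t,x) dx dt + ∫_s^τ ∫_{ℝ^d} F(t,x) μ(t,x) dx dt. -/
open MeasureTheory Set

noncomputable section

/-- Derivative of `f : ℝ^d → ℝ` along the vector field `X` (horizontal derivative `X f`). -/
def vderiv {d : ℕ} (X : (Fin d → ℝ) → (Fin d → ℝ)) (f : (Fin d → ℝ) → ℝ)
    (x : Fin d → ℝ) : ℝ := fderiv ℝ f x (X x)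

/-- Squared Euclidean norm of the horizontal gradient `∇_G f`. -/
def hgradSq {d m : ℕ} (X : Fin m → (Fin d → ℝ) → (Fin d → ℝ)) (f : (Fin d → ℝ) → ℝ)
    (x : Fin d → ℝ) : ℝ := ∑ i, (vderiv (X i) f x) ^ 2

/-- Horizontal Laplacian `Δ_G f = Σ X_i (X_i f)`. -/
def hLap {d m : ℕ} (X : Fin m → (Fin d → ℝ) → (Fin d → ℝ)) (f : (Fin d → ℝ) → ℝ)
    (x : Fin d → ℝ) : ℝ := ∑ i, vderiv (X i) (vderiv (X i) f) x

/-- Horizontal divergence `div_G B = Σ X_i B_i`. -/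
def hdiv {d m : ℕ} (X : Fin m → (Fin d → ℝ) → (Fin d → ℝ)) (B : (Fin d → ℝ) → Fin m → ℝ)
    (x : Fin d → ℝ) : ℝ := ∑ i, vderiv (X i) (fun y => B y i) x

/-- Euclidean divergence `Σ_j ∂_{x_j} X^j` of a vector field on `ℝ^d`. -/
def ediv {d : ℕ} (X : (Fin d → ℝ) → (Fin d → ℝ)) (x : Fin d → ℝ) : ℝ :=
  ∑ j, fderiv ℝ X x (Pi.single j 1) j

/-- Anisotropic dilations `δ_λ x = (λ^{w_1} x_1, …, λ^{w_d} x_d)`. -/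
def dil {d : ℕ} (w : Fin d → ℕ) (l : ℝ) (x : Fin d → ℝ) : Fin d → ℝ :=
  fun i => l ^ (w i) * x i

/-- A vector field is `δ`-homogeneous of degree one. -/
def homogOne {d : ℕ} (w : Fin d → ℕ) (X : (Fin d → ℝ) → (Fin d → ℝ)) : Prop :=
  ∀ l : ℝ, 0 < l → ∀ x, fderiv ℝ (dil w l) x (X x) = l • X (dil w l x)

/-!
Test the Fokker–Planck equation against `u` times a spatial cutoff `η`. Since the `X_i` are
divergence-free, `X_i` is skew-adjoint, and in `d/dt ∫ η u μ` every second-order term is absorbed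
into `∑ i, ∫ X_i η Z_i`, with a flux `Z` that is linear in `(μ, ∇_G μ)` with bounded coefficients
and hence integrable on the slab. Homogeneity gives `X_i (η ∘ δ_ε) = ε (X_i η) ∘ δ_ε = O(ε)`, so
this error disappears along dilated cutoffs. What remains is the integral of `η g μ` with the source
`g = ∂_t u − σ Δ_G u + b · ∇_G u` for the drift `b = γ |∇_G u|^(γ−2) ∇_G u`; as
`b · ∇_G u = γ |∇_G u|^γ`, the Hamilton–Jacobi equation turns `g` into `(γ − 1) |∇_G u|^γ + F`.
-/

open Filter Topology Asymptotics

section NormPow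

lemma tendsto_norm_rpow_nhds_zero {E : Type*} [SeminormedAddCommGroup E] {a : ℝ} (ha : 0 < a) :
    Tendsto (fun x : E => ‖x‖ ^ a) (𝓝 0) (𝓝 0) := by
  simpa [ha.ne'] using (tendsto_norm_zero (E := E)).rpow_const (.inr ha.le)

variable {E : Type*} [NormedAddCommGroup E] [InnerProductSpace ℝ E] {a : ℝ}

/-- The Fréchet derivative at `x` of the vector field `x ↦ ‖x‖ ^ a • x`, for `0 < a`; at `x = 0`
both summands vanish, whatever the junk value of `0 ^ (a - 2)`. -/
def normRpowSmulDeriv (a : ℝ) (x : E) : E →L[ℝ] E :=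
  ‖x‖ ^ a • ContinuousLinearMap.id ℝ E + ((a * ‖x‖ ^ (a - 2)) • innerSL ℝ x).smulRight x

lemma norm_normRpowSmulDeriv_le (ha : 0 < a) (x : E) :
    ‖normRpowSmulDeriv a x‖ ≤ (1 + a) * ‖x‖ ^ a := by
  obtain rfl | hx := eq_or_ne x 0
  · simp [normRpowSmulDeriv, ha.ne']
  have hx' : 0 < ‖x‖ := norm_pos_iff.2 hx
  calc ‖normRpowSmulDeriv a x‖
      ≤ ‖x‖ ^ a * ‖ContinuousLinearMap.id ℝ E‖ + a * ‖x‖ ^ (a - 2) * ‖x‖ * ‖x‖ := by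
        refine (norm_add_le _ _).trans_eq ?_
        rw [norm_smul, ContinuousLinearMap.norm_smulRight_apply, norm_smul, innerSL_apply_norm,
          Real.norm_of_nonneg (by positivity), Real.norm_of_nonneg (by positivity)]
    _ ≤ ‖x‖ ^ a * 1 + a * ‖x‖ ^ a := by
        refine add_le_add (by gcongr; exact ContinuousLinearMap.norm_id_le) (le_of_eq ?_)
        rw [Real.rpow_sub hx', Real.rpow_two]
        field_simp
    _ = (1 + a) * ‖x‖ ^ a := by ring

lemma continuous_normRpowSmulDeriv (ha : 0 < a) :
    Continuous (normRpowSmulDeriv a : E → E →L[ℝ] E) := by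
  refine continuous_iff_continuousAt.2 fun x => ?_
  obtain rfl | hx := eq_or_ne x 0
  · have hzero : normRpowSmulDeriv a (0 : E) = 0 := by simp [normRpowSmulDeriv, ha.ne']
    rw [ContinuousAt, hzero]
    refine squeeze_zero_norm (norm_normRpowSmulDeriv_le ha) ?_
    simpa using (tendsto_norm_rpow_nhds_zero ha).const_mul (1 + a)
  · have hpow (b : ℝ) : ContinuousAt (fun y : E => ‖y‖ ^ b) x :=
      continuousAt_id.norm.rpow_const (.inl (norm_ne_zero_iff.2 hx))
    have hsmulRight : Continuous fun p : (E →L[ℝ] ℝ) × E => p.1.smulRight p.2 :=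
      (ContinuousLinearMap.smulRightL ℝ E E).continuous₂
    exact ((hpow a).smul continuousAt_const).add (hsmulRight.continuousAt.comp
      (((continuousAt_const.mul (hpow (a - 2))).smul
        (innerSL ℝ).continuous.continuousAt).prodMk continuousAt_id))

lemma hasFDerivAt_norm_rpow_smul (ha : 0 < a) (x : E) :
    HasFDerivAt (fun y : E => ‖y‖ ^ a • y) (normRpowSmulDeriv a x) x := by
  obtain rfl | hx := eq_or_ne x 0
  · have hlittleO : (fun y : E => ‖y‖ ^ a • y) =o[𝓝 0] fun y => (1 : ℝ) • y :=
      ((isLittleO_one_iff ℝ).2 (tendsto_norm_rpow_nhds_zero ha)).smul_isBigO (isBigO_refl _ _)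
    refine .of_isLittleO ?_
    simpa [normRpowSmulDeriv, ha.ne'] using hlittleO
  · have hnorm : HasFDerivAt (fun y : E => ‖y‖ ^ a) ((a * ‖x‖ ^ (a - 2)) • innerSL ℝ x) x := by
      convert! ((hasStrictFDerivAt_norm_sq x).rpow_const (p := a / 2)
        (by simp [hx])).hasFDerivAt using 0
      simp_rw [← Real.rpow_natCast_mul (norm_nonneg _), ← Nat.cast_smul_eq_nsmul ℝ, smul_smul]
      ring_nf
    exact hnorm.smul (hasFDerivAt_id x)

lemma contDiff_norm_rpow_smul (ha : 0 ≤ a) : ContDiff ℝ 1 fun x : E => ‖x‖ ^ a • x := by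
  obtain rfl | ha := ha.eq_or_lt
  · simpa using contDiff_fun_id
  · exact contDiff_one_iff_hasFDerivAt.2
      ⟨_, continuous_normRpowSmulDeriv ha, hasFDerivAt_norm_rpow_smul ha⟩

end NormPow

section HorizontalCalculus

variable {d : ℕ} {X : (Fin d → ℝ) → (Fin d → ℝ)} {f g : (Fin d → ℝ) → ℝ} {x : Fin d → ℝ}

lemma vderiv_add (hf : DifferentiableAt ℝ f x) (hg : DifferentiableAt ℝ g x) :
    vderiv X (fun y => f y + g y) x = vderiv X f x + vderiv X g x := by
  simp [vderiv, fderiv_fun_add hf hg]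

lemma vderiv_sub (hf : DifferentiableAt ℝ f x) (hg : DifferentiableAt ℝ g x) :
    vderiv X (fun y => f y - g y) x = vderiv X f x - vderiv X g x := by
  simp [vderiv, fderiv_fun_sub hf hg]

lemma vderiv_mul (hf : DifferentiableAt ℝ f x) (hg : DifferentiableAt ℝ g x) :
    vderiv X (fun y => f y * g y) x = vderiv X f x * g x + f x * vderiv X g x := by
  simp [vderiv, fderiv_fun_mul hf hg]
  ring

lemma vderiv_const_mul (c : ℝ) (hf : DifferentiableAt ℝ f x) :
    vderiv X (fun y => c * f y) x = c * vderiv X f x := by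
  simp [vderiv, fderiv_const_mul hf]

lemma vderiv_eq_sum (X : (Fin d → ℝ) → (Fin d → ℝ)) (f : (Fin d → ℝ) → ℝ) (x : Fin d → ℝ) :
    vderiv X f x = ∑ j, X x j * fderiv ℝ f x (Pi.single j 1) := by
  conv_lhs => rw [vderiv, pi_eq_sum_univ' (X x), map_sum]
  simp only [map_smul, smul_eq_mul]

lemma contDiff_vderiv {n : ℕ} (hX : ContDiff ℝ n X) (hf : ContDiff ℝ (n + 1) f) :
    ContDiff ℝ n (vderiv X f) :=
  (hf.fderiv_right le_rfl).clm_apply hX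

lemma continuous_vderiv (hX : Continuous X) (hf : ContDiff ℝ 1 f) : Continuous (vderiv X f) :=
  (hf.continuous_fderiv one_ne_zero).clm_apply hX

lemma hasCompactSupport_vderiv (hf : HasCompactSupport f) : HasCompactSupport (vderiv X f) :=
  (hf.fderiv ℝ).mono fun x hx hzero => hx (by simp [vderiv, hzero])

lemma integral_vderiv_eq_neg_integral_ediv_mul (hX : ContDiff ℝ 1 X) (hf : ContDiff ℝ 1 f)
    (hc : HasCompactSupport f) : ∫ x, vderiv X f x = -∫ x, ediv X x * f x := by
  have hXdiff : Differentiable ℝ X := hX.differentiable one_ne_zero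
  have hXj (j : Fin d) : ContDiff ℝ 1 fun y => X y j := contDiff_pi.1 hX j
  have hpartial {h : (Fin d → ℝ) → ℝ} (hh : ContDiff ℝ 1 h) (j : Fin d) :
      Continuous fun x => fderiv ℝ h x (Pi.single j 1) :=
    (hh.continuous_fderiv one_ne_zero).clm_apply continuous_const
  have hint₁ (j : Fin d) : Integrable fun x => X x j * fderiv ℝ f x (Pi.single j 1) :=
    ((hXj j).continuous.mul (hpartial hf j)).integrable_of_hasCompactSupport
      (hc.fderiv_apply ℝ _).mul_left
  have hint₂ (j : Fin d) :
      Integrable fun x => fderiv ℝ (fun y => X y j) x (Pi.single j 1) * f x :=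
    ((hpartial (hXj j) j).mul hf.continuous).integrable_of_hasCompactSupport hc.mul_left
  have hint₃ (j : Fin d) : Integrable fun x => X x j * f x :=
    ((hXj j).continuous.mul hf.continuous).integrable_of_hasCompactSupport hc.mul_left
  calc ∫ x, vderiv X f x
      = ∑ j, ∫ x, X x j * fderiv ℝ f x (Pi.single j 1) := by
        simp only [vderiv_eq_sum]
        exact integral_finsetSum _ fun j _ => hint₁ j
    _ = ∑ j, -∫ x, fderiv ℝ (fun y => X y j) x (Pi.single j 1) * f x :=
        Finset.sum_congr rfl fun j _ => integral_mul_fderiv_eq_neg_fderiv_mul_of_integrable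
          (hint₂ j) (hint₁ j) (hint₃ j) (fun x _ => (hXj j).differentiable one_ne_zero x)
          (fun x _ => hf.differentiable one_ne_zero x)
    _ = -∫ x, ediv X x * f x := by
        rw [Finset.sum_neg_distrib, ← integral_finsetSum _ fun j _ => hint₂ j]
        simp only [fderiv_apply (hXdiff _), ediv, Finset.sum_mul, ContinuousLinearMap.comp_apply,
          ContinuousLinearMap.proj_apply]

lemma integral_mul_vderiv_eq_neg_vderiv_mul (hX : ContDiff ℝ 1 X) (hXdiv : ∀ x, ediv X x = 0)
    (hf : ContDiff ℝ 1 f) (hc : HasCompactSupport f) (hg : ContDiff ℝ 1 g) :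
    ∫ x, f x * vderiv X g x = -∫ x, vderiv X f x * g x := by
  have hint₁ : Integrable fun x => vderiv X f x * g x :=
    ((continuous_vderiv hX.continuous hf).mul hg.continuous).integrable_of_hasCompactSupport
      (hasCompactSupport_vderiv hc).mul_right
  have hint₂ : Integrable fun x => f x * vderiv X g x :=
    (hf.continuous.mul (continuous_vderiv hX.continuous hg)).integrable_of_hasCompactSupport
      hc.mul_right
  have hproduct (x : Fin d → ℝ) :
      vderiv X (fun y => f y * g y) x = vderiv X f x * g x + f x * vderiv X g x :=
    vderiv_mul (hf.differentiable one_ne_zero x) (hg.differentiable one_ne_zero x)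
  have hzero : ∫ x, vderiv X (fun y => f y * g y) x = 0 := by
    simp [integral_vderiv_eq_neg_integral_ediv_mul hX (hf.mul hg) hc.mul_right, hXdiv]
  rw [funext hproduct, integral_add hint₁ hint₂] at hzero
  linarith

end HorizontalCalculus

section HorizontalGradient

variable {d m : ℕ} {X : Fin m → (Fin d → ℝ) → (Fin d → ℝ)} {f : (Fin d → ℝ) → ℝ}

lemma integral_mul_hdiv_eq_neg_sum {B : (Fin d → ℝ) → Fin m → ℝ} (hX : ∀ i, ContDiff ℝ 1 (X i))
    (hXdiv : ∀ i x, ediv (X i) x = 0) (hf : ContDiff ℝ 1 f) (hc : HasCompactSupport f)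
    (hB : ∀ i, ContDiff ℝ 1 fun y => B y i) :
    ∫ x, f x * hdiv X B x = -∑ i, ∫ x, vderiv (X i) f x * B x i := by
  simp only [hdiv, Finset.mul_sum]
  rw [integral_finsetSum, ← Finset.sum_neg_distrib]
  · exact Finset.sum_congr rfl fun i _ =>
      integral_mul_vderiv_eq_neg_vderiv_mul (hX i) (hXdiv i) hf hc (hB i)
  · exact fun i _ => (hf.continuous.mul
      (continuous_vderiv (hX i).continuous (hB i))).integrable_of_hasCompactSupport hc.mul_right

/-- The horizontal gradient `∇_G f`, as a vector carrying the Euclidean norm. -/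
def hgrad (X : Fin m → (Fin d → ℝ) → (Fin d → ℝ)) (f : (Fin d → ℝ) → ℝ) (x : Fin d → ℝ) :
    EuclideanSpace ℝ (Fin m) := WithLp.toLp 2 fun i => vderiv (X i) f x

lemma hgrad_apply (X : Fin m → (Fin d → ℝ) → (Fin d → ℝ)) (f : (Fin d → ℝ) → ℝ) (x : Fin d → ℝ)
    (i : Fin m) : hgrad X f x i = vderiv (X i) f x := rfl

lemma norm_hgrad (X : Fin m → (Fin d → ℝ) → (Fin d → ℝ)) (f : (Fin d → ℝ) → ℝ) (x : Fin d → ℝ) :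
    ‖hgrad X f x‖ = √(hgradSq X f x) := by
  simp [hgrad, hgradSq, EuclideanSpace.norm_eq]

lemma abs_vderiv_le_sqrt_hgradSq (i : Fin m) (x : Fin d → ℝ) :
    |vderiv (X i) f x| ≤ √(hgradSq X f x) :=
  norm_hgrad X f x ▸ PiLp.norm_apply_le (hgrad X f x) i

/-- The drift `γ |∇_G v|^{γ−2} ∇_G v`, the derivative of the Hamiltonian `p ↦ |p|^γ` along
`p = ∇_G v`. -/
def powerDrift (X : Fin m → (Fin d → ℝ) → (Fin d → ℝ)) (γ : ℝ) (v : (Fin d → ℝ) → ℝ)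
    (x : Fin d → ℝ) (i : Fin m) : ℝ :=
  γ * √(hgradSq X v x) ^ (γ - 2) * vderiv (X i) v x

lemma contDiff_powerDrift {γ : ℝ} (hX : ∀ i, ContDiff ℝ 1 (X i)) (hγ : 2 ≤ γ)
    (hf : ContDiff ℝ 2 f) (i : Fin m) : ContDiff ℝ 1 fun x => powerDrift X γ f x i := by
  have hgrad_contDiff : ContDiff ℝ 1 (hgrad X f) :=
    contDiff_euclidean.2 fun j => contDiff_vderiv (hX j) hf
  have hpow : ContDiff ℝ 1 fun x => ‖hgrad X f x‖ ^ (γ - 2) • hgrad X f x :=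
    (contDiff_norm_rpow_smul (sub_nonneg.2 hγ)).comp hgrad_contDiff
  have heq : (fun x => powerDrift X γ f x i) =
      fun x => γ * (‖hgrad X f x‖ ^ (γ - 2) • hgrad X f x) i := by
    funext x
    simp [powerDrift, norm_hgrad, hgrad_apply, mul_assoc]
  exact heq ▸ contDiff_const.mul (contDiff_euclidean.1 hpow i)

lemma sum_powerDrift_mul_vderiv {γ : ℝ} (hγ : 2 ≤ γ) (x : Fin d → ℝ) :
    ∑ i, powerDrift X γ f x i * vderiv (X i) f x = γ * √(hgradSq X f x) ^ γ := by
  have hsq : √(hgradSq X f x) ^ 2 = ∑ i, vderiv (X i) f x ^ 2 :=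
    Real.sq_sqrt (Finset.sum_nonneg fun _ _ => sq_nonneg _)
  calc ∑ i, powerDrift X γ f x i * vderiv (X i) f x
      = γ * (√(hgradSq X f x) ^ (γ - 2) * √(hgradSq X f x) ^ 2) := by
        simp only [hsq, powerDrift, Finset.mul_sum]
        exact Finset.sum_congr rfl fun i _ => by ring
    _ = γ * √(hgradSq X f x) ^ γ := by
        rw [← Real.rpow_two, ← Real.rpow_add' (Real.sqrt_nonneg _) (by linarith), sub_add_cancel]

end HorizontalGradient

section IntegralLimits

lemma tendsto_integral_mul_of_bounded {α : Type*} [MeasurableSpace α] {ν : Measure α}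
    {φ : ℕ → α → ℝ} {ψ f : α → ℝ} {C : ℝ} (hφ : ∀ n, AEStronglyMeasurable (φ n) ν)
    (hC : ∀ n x, |φ n x| ≤ C) (hlim : ∀ x, Tendsto (fun n => φ n x) atTop (𝓝 (ψ x)))
    (hf : Integrable f ν) :
    Tendsto (fun n => ∫ x, φ n x * f x ∂ν) atTop (𝓝 (∫ x, ψ x * f x ∂ν)) := by
  refine tendsto_integral_of_dominated_convergence (fun x => C * |f x|)
    (fun n => (hφ n).mul hf.aestronglyMeasurable) (hf.abs.const_mul C)
    (fun n => .of_forall fun x => ?_) (.of_forall fun x => (hlim x).mul_const (f x))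
  rw [Real.norm_eq_abs, abs_mul]
  exact mul_le_mul_of_nonneg_right (hC n x) (abs_nonneg _)

lemma tendsto_integral_integral_mul_of_bounded {α β : Type*} [MeasurableSpace α]
    [MeasurableSpace β] {ν : Measure α} {ρ : Measure β} [SFinite ν] [SFinite ρ]
    {φ : ℕ → β → ℝ} {ψ : β → ℝ} {f : α → β → ℝ} {C : ℝ}
    (hφ : ∀ n, AEStronglyMeasurable (φ n) ρ) (hC : ∀ n x, |φ n x| ≤ C)
    (hlim : ∀ x, Tendsto (fun n => φ n x) atTop (𝓝 (ψ x)))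
    (hf : Integrable (fun p => f p.1 p.2) (ν.prod ρ)) :
    Tendsto (fun n => ∫ a, ∫ x, φ n x * f a x ∂ρ ∂ν) atTop
      (𝓝 (∫ a, ∫ x, ψ x * f a x ∂ρ ∂ν)) := by
  have hfubini {χ : β → ℝ} (hχ : AEStronglyMeasurable χ ρ) (hχC : ∀ x, |χ x| ≤ C) :
      ∫ p, χ p.2 * f p.1 p.2 ∂ν.prod ρ = ∫ a, ∫ x, χ x * f a x ∂ρ ∂ν :=
    integral_prod _ (hf.bdd_mul hχ.comp_snd (.of_forall fun p => hχC p.2))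
  have hψ : AEStronglyMeasurable ψ ρ :=
    aestronglyMeasurable_of_tendsto_ae atTop hφ (.of_forall hlim)
  have hψC (x : β) : |ψ x| ≤ C := le_of_tendsto (hlim x).abs (.of_forall (hC · x))
  rw [← hfubini hψ hψC]
  simp only [← hfubini (hφ _) (hC _)]
  exact tendsto_integral_mul_of_bounded (fun n => (hφ n).comp_snd) (fun n p => hC n p.2)
    (fun p => hlim p.2) hf

lemma integrable_prod_of_integral_norm_le {α β E : Type*} [MeasurableSpace α] [MeasurableSpace β]
    [NormedAddCommGroup E] {ν : Measure α} {ρ : Measure β} [IsFiniteMeasure ν] [SFinite ρ]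
    {f : α × β → E} {M : ℝ} (hf : AEStronglyMeasurable f (ν.prod ρ))
    (hint : ∀ᵐ a ∂ν, Integrable (fun b => f (a, b)) ρ)
    (hM : ∀ᵐ a ∂ν, ∫ b, ‖f (a, b)‖ ∂ρ ≤ M) : Integrable f (ν.prod ρ) := by
  refine (integrable_prod_iff hf).2 ⟨hint, .of_bound hf.norm.integral_prod_right' M ?_⟩
  filter_upwards [hM] with a ha
  rwa [Real.norm_of_nonneg (integral_nonneg fun _ => norm_nonneg _)]

variable {T E : Type*} [TopologicalSpace T] [TopologicalSpace E] {S : Set T} {η : E → ℝ}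

lemma continuous_slice {G : T → E → ℝ}
    (hG : ContinuousOn (fun p : T × E => G p.1 p.2) (S ×ˢ univ)) {t : T} (ht : t ∈ S) :
    Continuous (G t) :=
  hG.comp_continuous (Continuous.prodMk_right t) fun _ => ⟨ht, mem_univ _⟩

variable [MeasurableSpace E] [OpensMeasurableSpace E] {ν : Measure E} [IsFiniteMeasureOnCompacts ν]

lemma continuousOn_integral_mul_of_hasCompactSupport {G : T → E → ℝ} (hη : Continuous η)
    (hc : HasCompactSupport η) (hG : ContinuousOn (fun p : T × E => G p.1 p.2) (S ×ˢ univ)) :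
    ContinuousOn (fun t => ∫ x, η x * G t x ∂ν) S := by
  refine continuousOn_integral_of_compact_support (k := tsupport η) hc
    ((hη.comp continuous_snd).continuousOn.mul hG) fun t x _ hx => ?_
  rw [image_eq_zero_of_notMem_tsupport hx, zero_mul]

lemma hasDerivAt_integral_mul_of_hasCompactSupport {U : Set ℝ} {G G' : ℝ → E → ℝ}
    (hη : Continuous η) (hc : HasCompactSupport η) (hU : IsOpen U)
    (hG : ∀ t ∈ U, Continuous (G t))
    (hG' : ContinuousOn (fun p : ℝ × E => G' p.1 p.2) (U ×ˢ univ))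
    (hderiv : ∀ t ∈ U, ∀ x, HasDerivAt (fun r => G r x) (G' t x) t) {t : ℝ} (ht : t ∈ U) :
    HasDerivAt (fun r => ∫ x, η x * G r x ∂ν) (∫ x, η x * G' t x ∂ν) t := by
  obtain ⟨ε, hε, hball⟩ := Metric.nhds_basis_closedBall.mem_iff.1 (hU.mem_nhds ht)
  obtain ⟨C, hC⟩ := ((isCompact_closedBall t ε).prod hc).exists_bound_of_continuousOn
    (((hη.comp continuous_snd).continuousOn.mul hG').mono (prod_mono hball (subset_univ _)))
  have hcont (r : ℝ) (hr : r ∈ U) : Continuous fun x => η x * G r x := hη.mul (hG r hr)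
  have hbound (x : E) (r : ℝ) (hr : r ∈ Metric.closedBall t ε) :
      ‖η x * G' r x‖ ≤ (tsupport η).indicator (fun _ => C) x := by
    by_cases hx : x ∈ tsupport η
    · rw [indicator_of_mem hx]
      exact hC (r, x) ⟨hr, hx⟩
    · simp [indicator_of_notMem hx, image_eq_zero_of_notMem_tsupport hx]
  refine (hasDerivAt_integral_of_dominated_loc_of_deriv_le (F := fun r x => η x * G r x)
    (F' := fun r x => η x * G' r x) (Metric.closedBall_mem_nhds t hε) ?_
    ((hcont t ht).integrable_of_hasCompactSupport hc.mul_right)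
    (hη.mul (continuous_slice hG' ht)).aestronglyMeasurable (.of_forall hbound)
    ((integrable_indicator_iff (isClosed_tsupport η).measurableSet).2
      (integrableOn_const hc.measure_ne_top))
    (.of_forall fun x r hr => (hderiv r (hball hr) x).const_mul _)).2
  filter_upwards [hU.mem_nhds ht] with r hr
  exact (hcont r hr).aestronglyMeasurable

end IntegralLimits

section Slab

variable {d : ℕ} {s τ : ℝ}

/-- Lebesgue measure on the slab `[s, τ] × ℝ^d`, as a product so that Fubini applies directly. -/
abbrev slabMeasure (d : ℕ) (s τ : ℝ) : Measure (ℝ × (Fin d → ℝ)) :=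
  (volume.restrict (Icc s τ)).prod volume

lemma aestronglyMeasurable_slab {f : ℝ × (Fin d → ℝ) → ℝ}
    (hf : ContinuousOn f (Icc s τ ×ˢ univ)) :
    AEStronglyMeasurable f (slabMeasure d s τ) := by
  have hmeas := hf.aestronglyMeasurable (μ := (volume : Measure ℝ).prod volume)
    (measurableSet_Icc.prod .univ)
  rwa [← Measure.prod_restrict, Measure.restrict_univ] at hmeas

lemma integrable_slab_of_abs_le {f P : ℝ → (Fin d → ℝ) → ℝ} {M : ℝ}
    (hf : ContinuousOn (fun p : ℝ × (Fin d → ℝ) => f p.1 p.2) (Icc s τ ×ˢ univ))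
    (hle : ∀ t ∈ Icc s τ, ∀ x, |f t x| ≤ P t x) (hP : ∀ t ∈ Icc s τ, Integrable (P t))
    (hM : ∀ t ∈ Icc s τ, ∫ x, P t x ≤ M) :
    Integrable (fun p => f p.1 p.2) (slabMeasure d s τ) := by
  have hslice (t : ℝ) (ht : t ∈ Icc s τ) : Integrable (f t) :=
    (hP t ht).mono' (continuous_slice hf ht).aestronglyMeasurable (.of_forall (hle t ht))
  refine integrable_prod_of_integral_norm_le (M := M) (aestronglyMeasurable_slab hf)
    (ae_restrict_of_forall_mem measurableSet_Icc hslice)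
    (ae_restrict_of_forall_mem measurableSet_Icc fun t ht => ?_)
  exact (integral_mono (hslice t ht).norm (hP t ht) (hle t ht)).trans (hM t ht)

lemma continuousOn_sqrt_hgradSq_rpow {m : ℕ} {X : Fin m → (Fin d → ℝ) → (Fin d → ℝ)}
    {f : ℝ → (Fin d → ℝ) → ℝ} {S : Set (ℝ × (Fin d → ℝ))} {a : ℝ} (ha : 0 ≤ a)
    (hf : ∀ i, ContinuousOn (fun p : ℝ × (Fin d → ℝ) => vderiv (X i) (f p.1) p.2) S) :
    ContinuousOn (fun p : ℝ × (Fin d → ℝ) => √(hgradSq X (f p.1) p.2) ^ a) S :=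
  (continuousOn_finsetSum _ fun i _ => (hf i).pow 2).sqrt.rpow_const fun _ _ => .inr ha

/-- `f` is bounded on the slab `[s, τ] × ℝ^d`. -/
def IsBddOnSlab (s τ : ℝ) (f : ℝ → (Fin d → ℝ) → ℝ) : Prop :=
  ∃ C, ∀ t ∈ Icc s τ, ∀ x, |f t x| ≤ C

/-- `f` is jointly continuous and bounded on the slab `[s, τ] × ℝ^d`. -/
structure IsBddContOnSlab (s τ : ℝ) (f : ℝ → (Fin d → ℝ) → ℝ) : Prop where
  continuousOn : ContinuousOn (fun p : ℝ × (Fin d → ℝ) => f p.1 p.2) (Icc s τ ×ˢ univ)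
  bounded : IsBddOnSlab s τ f

namespace IsBddContOnSlab

variable {f g : ℝ → (Fin d → ℝ) → ℝ}

protected lemma const (c : ℝ) : IsBddContOnSlab s τ fun _ (_ : Fin d → ℝ) => c :=
  ⟨continuousOn_const, |c|, fun _ _ _ => le_rfl⟩

protected lemma add (hf : IsBddContOnSlab s τ f) (hg : IsBddContOnSlab s τ g) :
    IsBddContOnSlab s τ fun t x => f t x + g t x := by
  obtain ⟨Cf, hCf⟩ := hf.bounded
  obtain ⟨Cg, hCg⟩ := hg.bounded
  exact ⟨hf.continuousOn.add hg.continuousOn, Cf + Cg, fun t ht x =>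
    (abs_add_le _ _).trans (add_le_add (hCf t ht x) (hCg t ht x))⟩

protected lemma mul (hf : IsBddContOnSlab s τ f) (hg : IsBddContOnSlab s τ g) :
    IsBddContOnSlab s τ fun t x => f t x * g t x := by
  obtain ⟨Cf, hCf⟩ := hf.bounded
  obtain ⟨Cg, hCg⟩ := hg.bounded
  refine ⟨hf.continuousOn.mul hg.continuousOn, Cf * Cg, fun t ht x => ?_⟩
  rw [abs_mul]
  exact mul_le_mul (hCf t ht x) (hCg t ht x) (abs_nonneg _) ((abs_nonneg _).trans (hCf t ht x))

lemma integrable_mul_slice (hf : IsBddContOnSlab s τ f) {t : ℝ} (ht : t ∈ Icc s τ)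
    {h : (Fin d → ℝ) → ℝ} (hh : Integrable h) : Integrable fun x => f t x * h x := by
  obtain ⟨C, hC⟩ := hf.bounded
  exact hh.bdd_mul (continuous_slice hf.continuousOn ht).aestronglyMeasurable (.of_forall (hC t ht))

lemma integrable_mul (hf : IsBddContOnSlab s τ f) {h : ℝ × (Fin d → ℝ) → ℝ}
    (hh : Integrable h (slabMeasure d s τ)) :
    Integrable (fun p => f p.1 p.2 * h p) (slabMeasure d s τ) := by
  obtain ⟨C, hC⟩ := hf.bounded
  have hmem : ∀ᵐ p : ℝ × (Fin d → ℝ) ∂slabMeasure d s τ, p.1 ∈ Icc s τ :=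
    Measure.quasiMeasurePreserving_fst.ae (ae_restrict_mem measurableSet_Icc)
  refine hh.bdd_mul (aestronglyMeasurable_slab hf.continuousOn) (c := C) ?_
  filter_upwards [hmem] with p hp
  exact hC p.1 hp p.2

lemma integral_Ioc_integral_add_mul (hf : IsBddContOnSlab s τ f) (hg : IsBddContOnSlab s τ g)
    {h : ℝ → (Fin d → ℝ) → ℝ} (hslice : ∀ t ∈ Icc s τ, Integrable (h t))
    (hslab : Integrable (fun p => h p.1 p.2) (slabMeasure d s τ)) :
    ∫ t in Ioc s τ, ∫ x, (f t x + g t x) * h t x =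
      (∫ t in Ioc s τ, ∫ x, f t x * h t x) + ∫ t in Ioc s τ, ∫ x, g t x * h t x := by
  simp only [← integral_Icc_eq_integral_Ioc]
  rw [← integral_add (hf.integrable_mul hslab).integral_prod_left
    (hg.integrable_mul hslab).integral_prod_left]
  refine setIntegral_congr_fun measurableSet_Icc fun t ht => ?_
  simp only [add_mul]
  exact integral_add (hf.integrable_mul_slice ht (hslice t ht))
    (hg.integrable_mul_slice ht (hslice t ht))

lemma sqrt_hgradSq_rpow {m : ℕ} {X : Fin m → (Fin d → ℝ) → (Fin d → ℝ)} {a : ℝ} (ha : 0 ≤ a)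
    (hf : ∀ i, IsBddContOnSlab s τ fun t => vderiv (X i) (f t)) :
    IsBddContOnSlab s τ fun t x => √(hgradSq X (f t) x) ^ a := by
  choose C hC using fun i => (hf i).bounded
  refine ⟨continuousOn_sqrt_hgradSq_rpow ha fun i => (hf i).continuousOn,
    √(∑ i, C i ^ 2) ^ a, fun t ht x => ?_⟩
  have hsum : hgradSq X (f t) x ≤ ∑ i, C i ^ 2 := Finset.sum_le_sum fun i _ =>
    sq_le_sq.2 ((hC i t ht x).trans (le_abs_self _))
  rw [abs_of_nonneg (by positivity)]
  exact Real.rpow_le_rpow (Real.sqrt_nonneg _) (Real.sqrt_le_sqrt hsum) ha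

protected lemma powerDrift {m : ℕ} {X : Fin m → (Fin d → ℝ) → (Fin d → ℝ)} {γ : ℝ} (hγ : 2 ≤ γ)
    (hf : ∀ i, IsBddContOnSlab s τ fun t => vderiv (X i) (f t)) (i : Fin m) :
    IsBddContOnSlab s τ fun t x => powerDrift X γ (f t) x i :=
  ((IsBddContOnSlab.const γ).mul (sqrt_hgradSq_rpow (sub_nonneg.2 hγ) hf)).mul (hf i)

end IsBddContOnSlab

end Slab

section FixedTime

variable {d m : ℕ} {X : Fin m → (Fin d → ℝ) → (Fin d → ℝ)} {σ : ℝ}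
  {b : (Fin d → ℝ) → Fin m → ℝ} {v μ : (Fin d → ℝ) → ℝ}

/-- The flux `Z = v b μ + σ (v ∇_G μ − μ ∇_G v)`, through which `∂_t (v μ)` differs from a pure
source term when `v` solves `∂_t v − σ Δ_G v + b · ∇_G v = g` and `μ` solves the adjoint
equation. -/
def dualityFlux (X : Fin m → (Fin d → ℝ) → (Fin d → ℝ)) (σ : ℝ) (b : (Fin d → ℝ) → Fin m → ℝ)
    (v μ : (Fin d → ℝ) → ℝ) (x : Fin d → ℝ) (i : Fin m) : ℝ :=
  v x * (b x i * μ x) + σ * (v x * vderiv (X i) μ x - μ x * vderiv (X i) v x)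

lemma contDiff_dualityFlux (hX : ∀ i, ContDiff ℝ 1 (X i)) (hb : ∀ i, ContDiff ℝ 1 fun x => b x i)
    (hv : ContDiff ℝ 2 v) (hμ : ContDiff ℝ 2 μ) (i : Fin m) :
    ContDiff ℝ 1 fun x => dualityFlux X σ b v μ x i :=
  have hv₁ : ContDiff ℝ 1 v := hv.of_le one_le_two
  have hμ₁ : ContDiff ℝ 1 μ := hμ.of_le one_le_two
  (hv₁.mul ((hb i).mul hμ₁)).add (contDiff_const.mul
    ((hv₁.mul (contDiff_vderiv (hX i) hμ)).sub (hμ₁.mul (contDiff_vderiv (hX i) hv))))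

lemma hdiv_dualityFlux (hX : ∀ i, ContDiff ℝ 1 (X i)) (hb : ∀ i, ContDiff ℝ 1 fun x => b x i)
    (hv : ContDiff ℝ 2 v) (hμ : ContDiff ℝ 2 μ) (x : Fin d → ℝ) :
    hdiv X (dualityFlux X σ b v μ) x =
      (∑ i, b x i * vderiv (X i) v x) * μ x + v x * hdiv X (fun y i => b y i * μ y) x
        + σ * (v x * hLap X μ x - μ x * hLap X v x) := by
  have hvx : DifferentiableAt ℝ v x := hv.differentiable two_ne_zero x
  have hμx : DifferentiableAt ℝ μ x := hμ.differentiable two_ne_zero x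
  simp only [hdiv, hLap, Finset.sum_mul, Finset.mul_sum, ← Finset.sum_sub_distrib,
    ← Finset.sum_add_distrib]
  refine Finset.sum_congr rfl fun i _ => ?_
  have hXv : DifferentiableAt ℝ (vderiv (X i) v) x :=
    (contDiff_vderiv (hX i) hv).differentiable one_ne_zero x
  have hXμ : DifferentiableAt ℝ (vderiv (X i) μ) x :=
    (contDiff_vderiv (hX i) hμ).differentiable one_ne_zero x
  have hbμ : DifferentiableAt ℝ (fun y => b y i * μ y) x :=
    ((hb i).differentiable one_ne_zero x).mul hμx
  simp only [dualityFlux]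
  rw [vderiv_add (hvx.fun_mul hbμ) (((hvx.fun_mul hXμ).fun_sub (hμx.fun_mul hXv)).const_mul σ),
    vderiv_const_mul σ ((hvx.fun_mul hXμ).fun_sub (hμx.fun_mul hXv)),
    vderiv_sub (hvx.fun_mul hXμ) (hμx.fun_mul hXv), vderiv_mul hvx hbμ, vderiv_mul hvx hXμ,
    vderiv_mul hμx hXv]
  ring

lemma integral_mul_add_eq_of_adjoint_equations {η v' μ' g : (Fin d → ℝ) → ℝ}
    (hX : ∀ i, ContDiff ℝ 1 (X i)) (hXdiv : ∀ i x, ediv (X i) x = 0)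
    (hb : ∀ i, ContDiff ℝ 1 fun x => b x i) (hv : ContDiff ℝ 2 v) (hμ : ContDiff ℝ 2 μ)
    (hg : Continuous g) (hη : ContDiff ℝ 1 η) (hc : HasCompactSupport η)
    (hv' : ∀ x, v' x - σ * hLap X v x + ∑ i, b x i * vderiv (X i) v x = g x)
    (hμ' : ∀ x, -μ' x - σ * hLap X μ x - hdiv X (fun y i => b y i * μ y) x = 0) :
    ∫ x, η x * (v' x * μ x + v x * μ' x) =
      (∫ x, η x * (g x * μ x)) + ∑ i, ∫ x, vderiv (X i) η x * dualityFlux X σ b v μ x i := by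
  have hZ : ∀ i, ContDiff ℝ 1 fun x => dualityFlux X σ b v μ x i :=
    contDiff_dualityFlux hX hb hv hμ
  have hZdiv : Continuous (hdiv X (dualityFlux X σ b v μ)) :=
    continuous_finsetSum _ fun i _ => continuous_vderiv (hX i).continuous (hZ i)
  have hpointwise (x : Fin d → ℝ) : η x * (v' x * μ x + v x * μ' x) =
      η x * (g x * μ x) - η x * hdiv X (dualityFlux X σ b v μ) x := by
    rw [hdiv_dualityFlux hX hb hv hμ]
    linear_combination η x * μ x * hv' x - η x * v x * hμ' x
  simp only [hpointwise]
  rw [integral_sub, integral_mul_hdiv_eq_neg_sum hX hXdiv hη hc hZ, sub_neg_eq_add]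
  · exact (hη.continuous.mul (hg.mul hμ.continuous)).integrable_of_hasCompactSupport hc.mul_right
  · exact (hη.continuous.mul hZdiv).integrable_of_hasCompactSupport hc.mul_right

end FixedTime

section Cutoff

variable {d m : ℕ} {w : Fin d → ℕ} {X : Fin m → (Fin d → ℝ) → (Fin d → ℝ)}

/-- A sequence of compactly supported `C¹` functions `η n → 1` whose horizontal derivatives tend
to `0`, boundedly and pointwise. Its existence is the only way in which homogeneity of the vector
fields enters the duality. -/
structure IsCutoffSequence (X : Fin m → (Fin d → ℝ) → (Fin d → ℝ)) (η : ℕ → (Fin d → ℝ) → ℝ) :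
    Prop where
  contDiff : ∀ n, ContDiff ℝ 1 (η n)
  hasCompactSupport : ∀ n, HasCompactSupport (η n)
  bounded : ∃ C, ∀ n x, |η n x| ≤ C
  tendsto : ∀ x, Tendsto (fun n => η n x) atTop (𝓝 1)
  bounded_vderiv : ∀ i, ∃ C, ∀ n x, |vderiv (X i) (η n) x| ≤ C
  tendsto_vderiv : ∀ i x, Tendsto (fun n => vderiv (X i) (η n) x) atTop (𝓝 0)

lemma contDiff_dil (w : Fin d → ℕ) (l : ℝ) {n : WithTop ℕ∞} : ContDiff ℝ n (dil w l) :=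
  contDiff_pi.2 fun i => contDiff_const.mul (contDiff_apply ℝ ℝ i)

lemma tendsto_dil_nhds_zero (hw : ∀ i, 0 < w i) (x : Fin d → ℝ) :
    Tendsto (fun l => dil w l x) (𝓝 0) (𝓝 0) := by
  refine tendsto_pi_nhds.2 fun i => ?_
  simpa [dil, (hw i).ne'] using ((continuous_pow (M := ℝ) (w i)).tendsto 0).mul_const (x i)

lemma hasCompactSupport_comp_dil {f : (Fin d → ℝ) → ℝ} (hf : HasCompactSupport f) {l : ℝ}
    (hl : l ≠ 0) : HasCompactSupport (f ∘ dil w l) :=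
  hf.comp_homeomorph (.piCongrRight fun i => .mulLeft₀ (l ^ w i) (pow_ne_zero _ hl))

lemma vderiv_comp_dil {Y : (Fin d → ℝ) → (Fin d → ℝ)} (hY : homogOne w Y) {f : (Fin d → ℝ) → ℝ}
    (hf : Differentiable ℝ f) {l : ℝ} (hl : 0 < l) (x : Fin d → ℝ) :
    vderiv Y (f ∘ dil w l) x = l * vderiv Y f (dil w l x) := by
  have hdil : DifferentiableAt ℝ (dil w l) x := (contDiff_dil w l).differentiable one_ne_zero x
  simp [vderiv, fderiv_comp x (hf _) hdil, hY l hl x]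

lemma exists_isCutoffSequence (hw : ∀ i, 0 < w i) (hX : ∀ i, Continuous (X i))
    (hXhom : ∀ i, homogOne w (X i)) : ∃ η, IsCutoffSequence X η := by
  let f : ContDiffBump (0 : Fin d → ℝ) := ⟨1, 2, one_pos, one_lt_two⟩
  let l : ℕ → ℝ := fun n => 1 / (n + 1)
  have hf : ContDiff ℝ 1 f := f.contDiff
  have hl₀ (n : ℕ) : 0 < l n := Nat.one_div_pos_of_nat
  have hl₁ (n : ℕ) : l n ≤ 1 :=
    div_le_one_of_le₀ (by linarith [n.cast_nonneg (α := ℝ)]) (by positivity)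
  have hl : Tendsto l atTop (𝓝 0) := tendsto_one_div_add_atTop_nhds_zero_nat
  have hvderiv (i : Fin m) (n : ℕ) (x : Fin d → ℝ) :
      vderiv (X i) (f ∘ dil w (l n)) x = l n * vderiv (X i) f (dil w (l n) x) :=
    vderiv_comp_dil (hXhom i) (hf.differentiable one_ne_zero) (hl₀ n) x
  choose C hC using fun i => (hasCompactSupport_vderiv
    f.hasCompactSupport).exists_bound_of_continuous (continuous_vderiv (hX i) hf)
  have hbound (i : Fin m) (n : ℕ) (x : Fin d → ℝ) :
      |vderiv (X i) (f ∘ dil w (l n)) x| ≤ l n * C i := by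
    rw [hvderiv, abs_mul, abs_of_pos (hl₀ n)]
    exact mul_le_mul_of_nonneg_left (hC i _) (hl₀ n).le
  refine ⟨fun n => f ∘ dil w (l n), fun n => hf.comp (contDiff_dil w (l n)),
    fun n => hasCompactSupport_comp_dil f.hasCompactSupport (hl₀ n).ne',
    ⟨1, fun n x => (abs_of_nonneg f.nonneg).trans_le f.le_one⟩, fun x => ?_,
    fun i => ⟨C i, fun n x => (hbound i n x).trans ?_⟩, fun i x => ?_⟩
  · have hone : f 0 = 1 := f.one_of_mem_closedBall (by simp [f])
    exact hone ▸ (f.continuous.tendsto 0).comp ((tendsto_dil_nhds_zero hw x).comp hl)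
  · exact mul_le_of_le_one_left ((norm_nonneg _).trans (hC i 0)) (hl₁ n)
  · exact squeeze_zero_norm (hbound i · x) (by simpa using hl.mul_const (C i))

end Cutoff

section Duality

variable {d m : ℕ} {X : Fin m → (Fin d → ℝ) → (Fin d → ℝ)} {σ s τ : ℝ}
  {b : ℝ → (Fin d → ℝ) → Fin m → ℝ} {g u μ : ℝ → (Fin d → ℝ) → ℝ}

/-- `v` is a classical function on `[s, τ] × ℝ^d`: it is `C²` in space and differentiable in time
on `(s, τ)`, and `v`, `∇_G v`, `∂_t v` are jointly continuous. -/
structure HorizontallyRegular (X : Fin m → (Fin d → ℝ) → (Fin d → ℝ)) (s τ : ℝ)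
    (v : ℝ → (Fin d → ℝ) → ℝ) : Prop where
  continuousOn : ContinuousOn (fun p : ℝ × (Fin d → ℝ) => v p.1 p.2) (Icc s τ ×ˢ univ)
  contDiff : ∀ t ∈ Icc s τ, ContDiff ℝ 2 (v t)
  differentiableAt_time : ∀ x, ∀ t ∈ Ioo s τ, DifferentiableAt ℝ (fun r => v r x) t
  continuousOn_vderiv : ∀ i, ContinuousOn
    (fun p : ℝ × (Fin d → ℝ) => vderiv (X i) (v p.1) p.2) (Icc s τ ×ˢ univ)
  continuousOn_deriv : ContinuousOn
    (fun p : ℝ × (Fin d → ℝ) => deriv (fun r => v r p.2) p.1) (Ioo s τ ×ˢ univ)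

/-- `u` is a classical solution of `∂_t u − σ Δ_G u + b · ∇_G u = g`, and `μ` one of the adjoint
Fokker–Planck equation `−∂_t μ − σ Δ_G μ − div_G (b μ) = 0`. -/
structure IsDualPair (X : Fin m → (Fin d → ℝ) → (Fin d → ℝ)) (σ s τ : ℝ)
    (b : ℝ → (Fin d → ℝ) → Fin m → ℝ) (g u μ : ℝ → (Fin d → ℝ) → ℝ) : Prop where
  regular : HorizontallyRegular X s τ u
  adjoint_regular : HorizontallyRegular X s τ μ
  continuousOn_drift : ∀ i, ContinuousOn
    (fun p : ℝ × (Fin d → ℝ) => b p.1 p.2 i) (Icc s τ ×ˢ univ)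
  contDiff_drift : ∀ t ∈ Icc s τ, ∀ i, ContDiff ℝ 1 fun x => b t x i
  continuousOn_source : ContinuousOn (fun p : ℝ × (Fin d → ℝ) => g p.1 p.2) (Icc s τ ×ˢ univ)
  equation : ∀ t ∈ Ioo s τ, ∀ x, deriv (fun r => u r x) t - σ * hLap X (u t) x
    + ∑ i, b t x i * vderiv (X i) (u t) x = g t x
  adjoint_equation : ∀ t ∈ Ioo s τ, ∀ x, -deriv (fun r => μ r x) t - σ * hLap X (μ t) x
    - hdiv X (fun y i => b t y i * μ t y) x = 0

namespace IsDualPair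

lemma continuousOn_dualityFlux (h : IsDualPair X σ s τ b g u μ) (i : Fin m) :
    ContinuousOn (fun p : ℝ × (Fin d → ℝ) => dualityFlux X σ (b p.1) (u p.1) (μ p.1) p.2 i)
      (Icc s τ ×ˢ univ) :=
  (h.regular.continuousOn.mul ((h.continuousOn_drift i).mul h.adjoint_regular.continuousOn)).add
    (continuousOn_const.mul
      ((h.regular.continuousOn.mul (h.adjoint_regular.continuousOn_vderiv i)).sub
        (h.adjoint_regular.continuousOn.mul (h.regular.continuousOn_vderiv i))))

variable {η : (Fin d → ℝ) → ℝ}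

lemma hasDerivAt_integral (h : IsDualPair X σ s τ b g u μ) (hX : ∀ i, ContDiff ℝ 1 (X i))
    (hXdiv : ∀ i x, ediv (X i) x = 0) (hη : ContDiff ℝ 1 η) (hc : HasCompactSupport η) {t : ℝ}
    (ht : t ∈ Ioo s τ) :
    HasDerivAt (fun r => ∫ x, η x * (u r x * μ r x))
      ((∫ x, η x * (g t x * μ t x))
        + ∑ i, ∫ x, vderiv (X i) η x * dualityFlux X σ (b t) (u t) (μ t) x i) t := by
  have hsub : Ioo s τ ×ˢ (univ : Set (Fin d → ℝ)) ⊆ Icc s τ ×ˢ univ :=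
    prod_mono Ioo_subset_Icc_self subset_rfl
  have ht' : t ∈ Icc s τ := Ioo_subset_Icc_self ht
  obtain ⟨hu, hμ⟩ := And.intro h.regular h.adjoint_regular
  rw [← integral_mul_add_eq_of_adjoint_equations hX hXdiv (h.contDiff_drift t ht')
    (hu.contDiff t ht') (hμ.contDiff t ht') (continuous_slice h.continuousOn_source ht') hη hc
    (h.equation t ht) (h.adjoint_equation t ht)]
  exact hasDerivAt_integral_mul_of_hasCompactSupport (G := fun r x => u r x * μ r x)
    hη.continuous hc isOpen_Ioo
    (fun r hr => have hr' := Ioo_subset_Icc_self hr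
      (hu.contDiff r hr').continuous.mul (hμ.contDiff r hr').continuous)
    ((hu.continuousOn_deriv.mul (hμ.continuousOn.mono hsub)).add
      ((hu.continuousOn.mono hsub).mul hμ.continuousOn_deriv))
    (fun r hr x => (hu.differentiableAt_time x r hr).hasDerivAt.fun_mul
      (hμ.differentiableAt_time x r hr).hasDerivAt) ht

lemma integral_mul_sub (h : IsDualPair X σ s τ b g u μ) (hsτ : s ≤ τ)
    (hX : ∀ i, ContDiff ℝ 1 (X i)) (hXdiv : ∀ i x, ediv (X i) x = 0) (hη : ContDiff ℝ 1 η)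
    (hc : HasCompactSupport η) :
    (∫ x, η x * (u τ x * μ τ x)) - ∫ x, η x * (u s x * μ s x) =
      (∫ t in Icc s τ, ∫ x, η x * (g t x * μ t x))
        + ∑ i, ∫ t in Icc s τ, ∫ x,
            vderiv (X i) η x * dualityFlux X σ (b t) (u t) (μ t) x i := by
  have hsource : ContinuousOn (fun t => ∫ x, η x * (g t x * μ t x)) (Icc s τ) :=
    continuousOn_integral_mul_of_hasCompactSupport hη.continuous hc
      (h.continuousOn_source.mul h.adjoint_regular.continuousOn)
  have hflux (i : Fin m) : ContinuousOn
      (fun t => ∫ x, vderiv (X i) η x * dualityFlux X σ (b t) (u t) (μ t) x i) (Icc s τ) :=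
    continuousOn_integral_mul_of_hasCompactSupport (continuous_vderiv (hX i).continuous hη)
      (hasCompactSupport_vderiv hc) (h.continuousOn_dualityFlux i)
  have hfluxes := continuousOn_finsetSum Finset.univ fun i _ => hflux i
  have hboundary : ContinuousOn (fun t => ∫ x, η x * (u t x * μ t x)) (Icc s τ) :=
    continuousOn_integral_mul_of_hasCompactSupport hη.continuous hc
      (h.regular.continuousOn.mul h.adjoint_regular.continuousOn)
  rw [← intervalIntegral.integral_eq_sub_of_hasDerivAt_of_le hsτ hboundary
      (fun t ht => h.hasDerivAt_integral hX hXdiv hη hc ht) 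
      ((hsource.add hfluxes).intervalIntegrable_of_Icc hsτ),
    intervalIntegral.integral_of_le hsτ, ← integral_Icc_eq_integral_Ioc,
    integral_add hsource.integrableOn_Icc hfluxes.integrableOn_Icc,
    integral_finsetSum _ fun i _ => (hflux i).integrableOn_Icc]

lemma integrable_dualityFlux (h : IsDualPair X σ s τ b g u μ) (hu : IsBddOnSlab s τ u)
    (hXu : ∀ i, IsBddOnSlab s τ fun t => vderiv (X i) (u t))
    (hb : ∀ i, IsBddOnSlab s τ fun t x => b t x i)
    (hμ : Integrable (fun p => μ p.1 p.2) (slabMeasure d s τ))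
    (hXμ : ∀ i, Integrable (fun p => vderiv (X i) (μ p.1) p.2) (slabMeasure d s τ)) (i : Fin m) :
    Integrable (fun p => dualityFlux X σ (b p.1) (u p.1) (μ p.1) p.2 i) (slabMeasure d s τ) := by
  have hu' : IsBddContOnSlab s τ u := ⟨h.regular.continuousOn, hu⟩
  have hXu' : IsBddContOnSlab s τ fun t => vderiv (X i) (u t) :=
    ⟨h.regular.continuousOn_vderiv i, hXu i⟩
  have hb' : IsBddContOnSlab s τ fun t x => b t x i := ⟨h.continuousOn_drift i, hb i⟩
  refine (((hu'.mul hb').integrable_mul hμ).add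
    (((hu'.integrable_mul (hXμ i)).sub (hXu'.integrable_mul hμ)).const_mul σ)).congr
    (.of_forall fun p => ?_)
  simp only [dualityFlux, Pi.add_apply, Pi.sub_apply]
  ring

theorem integral_mul_eq (h : IsDualPair X σ s τ b g u μ) (hsτ : s ≤ τ)
    (hX : ∀ i, ContDiff ℝ 1 (X i)) (hXdiv : ∀ i x, ediv (X i) x = 0)
    {η : ℕ → (Fin d → ℝ) → ℝ} (hη : IsCutoffSequence X η) (hu : IsBddOnSlab s τ u)
    (hXu : ∀ i, IsBddOnSlab s τ fun t => vderiv (X i) (u t))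
    (hb : ∀ i, IsBddOnSlab s τ fun t x => b t x i) (hg : IsBddOnSlab s τ g)
    (hμs : Integrable (μ s)) (hμτ : Integrable (μ τ))
    (hμ : Integrable (fun p => μ p.1 p.2) (slabMeasure d s τ))
    (hXμ : ∀ i, Integrable (fun p => vderiv (X i) (μ p.1) p.2) (slabMeasure d s τ)) :
    ∫ x, u τ x * μ τ x = (∫ x, u s x * μ s x) + ∫ t in Icc s τ, ∫ x, g t x * μ t x := by
  have hηmeas (n : ℕ) : AEStronglyMeasurable (η n) volume :=
    (hη.contDiff n).continuous.aestronglyMeasurable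
  obtain ⟨C, hC⟩ := hη.bounded
  have hboundary {t : ℝ} (ht : t ∈ Icc s τ) (hμt : Integrable (μ t)) :
      Tendsto (fun n => ∫ x, η n x * (u t x * μ t x)) atTop (𝓝 (∫ x, u t x * μ t x)) := by
    simpa only [one_mul] using tendsto_integral_mul_of_bounded hηmeas hC hη.tendsto
      (IsBddContOnSlab.integrable_mul_slice ⟨h.regular.continuousOn, hu⟩ ht hμt)
  have hsource : Tendsto (fun n => ∫ t in Icc s τ, ∫ x, η n x * (g t x * μ t x)) atTop
      (𝓝 (∫ t in Icc s τ, ∫ x, g t x * μ t x)) := by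
    simpa only [one_mul] using tendsto_integral_integral_mul_of_bounded hηmeas hC hη.tendsto
      (IsBddContOnSlab.integrable_mul ⟨h.continuousOn_source, hg⟩ hμ)
  have hflux (i : Fin m) : Tendsto (fun n => ∫ t in Icc s τ, ∫ x,
      vderiv (X i) (η n) x * dualityFlux X σ (b t) (u t) (μ t) x i) atTop (𝓝 0) := by
    obtain ⟨C', hC'⟩ := hη.bounded_vderiv i
    simpa only [zero_mul, integral_zero] using tendsto_integral_integral_mul_of_bounded
      (fun n => (continuous_vderiv (hX i).continuous (hη.contDiff n)).aestronglyMeasurable) hC'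
      (hη.tendsto_vderiv i) (h.integrable_dualityFlux hu hXu hb hμ hXμ i)
  have hlim := hsource.add (tendsto_finsetSum Finset.univ fun i _ => hflux i)
  have heq := tendsto_nhds_unique
    ((hboundary (right_mem_Icc.2 hsτ) hμτ).sub (hboundary (left_mem_Icc.2 hsτ) hμs))
    (hlim.congr fun n =>
      (h.integral_mul_sub hsτ hX hXdiv (hη.contDiff n) (hη.hasCompactSupport n)).symm)
  rw [Finset.sum_const_zero, add_zero] at heq
  linarith

end IsDualPair

end Duality

section HamiltonJacobi

variable {d m : ℕ} {X : Fin m → (Fin d → ℝ) → (Fin d → ℝ)} {σ γ s τ : ℝ}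
  {F u μ : ℝ → (Fin d → ℝ) → ℝ}

lemma isDualPair_powerDrift (hX : ∀ i, ContDiff ℝ 1 (X i)) (hγ : 2 ≤ γ)
    (hF : ContinuousOn (fun p : ℝ × (Fin d → ℝ) => F p.1 p.2) (Icc s τ ×ˢ univ))
    (hu : HorizontallyRegular X s τ u) (hμ : HorizontallyRegular X s τ μ)
    (hHJ : ∀ t ∈ Ioo s τ, ∀ x, deriv (fun r => u r x) t - σ * hLap X (u t) x
      + √(hgradSq X (u t) x) ^ γ = F t x)
    (hFP : ∀ t ∈ Ioo s τ, ∀ x, -deriv (fun r => μ r x) t - σ * hLap X (μ t) x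
      - hdiv X (fun y i => powerDrift X γ (u t) y i * μ t y) x = 0) :
    IsDualPair X σ s τ (fun t => powerDrift X γ (u t))
      (fun t x => (γ - 1) * √(hgradSq X (u t) x) ^ γ + F t x) u μ where
  regular := hu
  adjoint_regular := hμ
  continuousOn_drift i := (continuousOn_const.mul (continuousOn_sqrt_hgradSq_rpow
    (sub_nonneg.2 hγ) hu.continuousOn_vderiv)).mul (hu.continuousOn_vderiv i)
  contDiff_drift t ht i := contDiff_powerDrift hX hγ (hu.contDiff t ht) i
  continuousOn_source := (continuousOn_const.mul (continuousOn_sqrt_hgradSq_rpow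
    (zero_le_two.trans hγ) hu.continuousOn_vderiv)).add hF
  equation t ht x := by
    rw [sum_powerDrift_mul_vderiv hγ]
    linear_combination hHJ t ht x
  adjoint_equation := hFP

theorem hamiltonJacobi_fokkerPlanck_duality_general (hX : ∀ i, ContDiff ℝ 1 (X i))
    (hXdiv : ∀ i x, ediv (X i) x = 0) {η : ℕ → (Fin d → ℝ) → ℝ} (hη : IsCutoffSequence X η)
    (hγ : 2 ≤ γ) (hsτ : s ≤ τ)
    (hF : ContinuousOn (fun p : ℝ × (Fin d → ℝ) => F p.1 p.2) (Icc s τ ×ˢ univ))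
    (hFbdd : IsBddOnSlab s τ F)
    (hu : HorizontallyRegular X s τ u) (hubdd : IsBddOnSlab s τ u)
    (hXubdd : ∀ i, IsBddOnSlab s τ fun t => vderiv (X i) (u t))
    (hHJ : ∀ t ∈ Ioo s τ, ∀ x, deriv (fun r => u r x) t - σ * hLap X (u t) x
      + √(hgradSq X (u t) x) ^ γ = F t x)
    (hμ : HorizontallyRegular X s τ μ)
    (hμint : ∀ t ∈ Icc s τ, Integrable fun x => |μ t x| + √(hgradSq X (μ t) x))
    {M : ℝ} (hμsup : ∀ t ∈ Icc s τ, ∫ x, (|μ t x| + √(hgradSq X (μ t) x)) ≤ M)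
    (hFP : ∀ t ∈ Ioo s τ, ∀ x, -deriv (fun r => μ r x) t - σ * hLap X (μ t) x
      - hdiv X (fun y i => powerDrift X γ (u t) y i * μ t y) x = 0) :
    ∫ x, u τ x * μ τ x = (∫ x, u s x * μ s x)
      + (∫ t in Ioc s τ, ∫ x, (γ - 1) * √(hgradSq X (u t) x) ^ γ * μ t x)
      + ∫ t in Ioc s τ, ∫ x, F t x * μ t x := by
  have hle (t : ℝ) (x : Fin d → ℝ) : |μ t x| ≤ |μ t x| + √(hgradSq X (μ t) x) :=
    le_add_of_nonneg_right (Real.sqrt_nonneg _)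
  have hXle (i : Fin m) (t : ℝ) (x : Fin d → ℝ) :
      |vderiv (X i) (μ t) x| ≤ |μ t x| + √(hgradSq X (μ t) x) :=
    (abs_vderiv_le_sqrt_hgradSq i x).trans (le_add_of_nonneg_left (abs_nonneg _))
  have hμslice (t : ℝ) (ht : t ∈ Icc s τ) : Integrable (μ t) :=
    (hμint t ht).mono' (hμ.contDiff t ht).continuous.aestronglyMeasurable (.of_forall (hle t))
  have hμslab := integrable_slab_of_abs_le hμ.continuousOn (fun t _ => hle t) hμint hμsup
  have hXμslab (i : Fin m) := integrable_slab_of_abs_le (hμ.continuousOn_vderiv i)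
    (fun t _ => hXle i t) hμint hμsup
  have hXu (i : Fin m) : IsBddContOnSlab s τ fun t => vderiv (X i) (u t) :=
    ⟨hu.continuousOn_vderiv i, hXubdd i⟩
  have hpower : IsBddContOnSlab s τ fun t x => (γ - 1) * √(hgradSq X (u t) x) ^ γ :=
    (IsBddContOnSlab.const _).mul (.sqrt_hgradSq_rpow (zero_le_two.trans hγ) hXu)
  have hF' : IsBddContOnSlab s τ F := ⟨hF, hFbdd⟩
  rw [(isDualPair_powerDrift hX hγ hF hu hμ hHJ hFP).integral_mul_eq hsτ hX hXdiv hη hubdd hXubdd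
    (fun i => (IsBddContOnSlab.powerDrift hγ hXu i).bounded) (hpower.add hF').bounded
    (hμslice s (left_mem_Icc.2 hsτ)) (hμslice τ (right_mem_Icc.2 hsτ)) hμslab hXμslab,
    integral_Icc_eq_integral_Ioc, hpower.integral_Ioc_integral_add_mul hF' hμslice hμslab,
    add_assoc]

end HamiltonJacobi

/-- Duality identity between the Hamilton–Jacobi equation
`∂_t u − σ Δ_G u + |∇_G u|^γ = F` and the adjoint Fokker–Planck equation
`−∂_t μ − σ Δ_G μ − div_G(γ |∇_G u|^{γ−2} ∇_G u μ) = 0`: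
`∫ u(τ) μ(τ) = ∫ u(s) μ(s) + ∫∫ (γ−1)|∇_G u|^γ μ + ∫∫ F μ`. -/
theorem hamiltonJacobi_fokkerPlanck_duality {d m : ℕ} (hd : 0 < d) (hm : 0 < m)
    (w : Fin d → ℕ) (hw : ∀ i, 0 < w i)
    (X : Fin m → (Fin d → ℝ) → (Fin d → ℝ)) (hXsm : ∀ i, ContDiff ℝ (⊤ : ℕ∞) (X i))
    (hXdivfree : ∀ i x, ediv (X i) x = 0)
    (hXhom : ∀ i, homogOne w (X i))
    (σ γ s τ : ℝ) (hσ : 0 < σ) (hγ : 2 ≤ γ) (hs : 0 ≤ s) (hsτ : s < τ)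
    (F : ℝ → (Fin d → ℝ) → ℝ) (MF : ℝ)
    (hFcont : ContinuousOn (fun p : ℝ × (Fin d → ℝ) => F p.1 p.2) (Set.Icc s τ ×ˢ Set.univ))
    (hFbd : ∀ t ∈ Set.Icc s τ, ∀ x, |F t x| ≤ MF)
    -- regularity and boundedness of u
    (u : ℝ → (Fin d → ℝ) → ℝ)
    (hucont : ContinuousOn (fun p : ℝ × (Fin d → ℝ) => u p.1 p.2) (Set.Icc s τ ×ˢ Set.univ))
    (hux : ∀ t ∈ Set.Icc s τ, ContDiff ℝ 2 (u t))
    (hut : ∀ (x : Fin d → ℝ), ∀ t ∈ Set.Ioo s τ, DifferentiableAt ℝ (fun r => u r x) t)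
    (huxcont : ∀ i, ContinuousOn (fun p : ℝ × (Fin d → ℝ) => vderiv (X i) (u p.1) p.2)
        (Set.Icc s τ ×ˢ Set.univ))
    (huxxcont : ∀ i i', ContinuousOn
        (fun p : ℝ × (Fin d → ℝ) => vderiv (X i) (vderiv (X i') (u p.1)) p.2)
        (Set.Icc s τ ×ˢ Set.univ))
    (hutcont : ContinuousOn (fun p : ℝ × (Fin d → ℝ) => deriv (fun r => u r p.2) p.1)
        (Set.Ioo s τ ×ˢ Set.univ))
    (Mu : ℝ)
    (hubd : ∀ t ∈ Set.Icc s τ, ∀ x, |u t x| ≤ Mu ∧ (∀ i, |vderiv (X i) (u t) x| ≤ Mu) ∧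
        (∀ i i', |vderiv (X i) (vderiv (X i') (u t)) x| ≤ Mu))
    -- u solves the Hamilton–Jacobi equation
    (hHJ : ∀ t ∈ Set.Ioo s τ, ∀ x,
        deriv (fun r => u r x) t - σ * hLap X (u t) x
          + Real.sqrt (hgradSq X (u t) x) ^ γ = F t x)
    -- regularity, positivity and integrability of μ
    (μ : ℝ → (Fin d → ℝ) → ℝ) (hμpos : ∀ t x, 0 ≤ μ t x)
    (hμcont : ContinuousOn (fun p : ℝ × (Fin d → ℝ) => μ p.1 p.2) (Set.Icc s τ ×ˢ Set.univ))
    (hμx : ∀ t ∈ Set.Icc s τ, ContDiff ℝ 2 (μ t))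
    (hμt : ∀ (x : Fin d → ℝ), ∀ t ∈ Set.Ioo s τ, DifferentiableAt ℝ (fun r => μ r x) t)
    (hμxcont : ∀ i, ContinuousOn (fun p : ℝ × (Fin d → ℝ) => vderiv (X i) (μ p.1) p.2)
        (Set.Icc s τ ×ˢ Set.univ))
    (hμxxcont : ∀ i i', ContinuousOn
        (fun p : ℝ × (Fin d → ℝ) => vderiv (X i) (vderiv (X i') (μ p.1)) p.2)
        (Set.Icc s τ ×ˢ Set.univ))
    (hμtcont : ContinuousOn (fun p : ℝ × (Fin d → ℝ) => deriv (fun r => μ r p.2) p.1)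
        (Set.Ioo s τ ×ˢ Set.univ))
    (hμint : ∀ t ∈ Set.Icc s τ, MeasureTheory.Integrable
        (fun x : Fin d → ℝ => μ t x + Real.sqrt (hgradSq X (μ t) x)))
    (Mμ : ℝ) (hμsup : ∀ t ∈ Set.Icc s τ,
        (∫ x : Fin d → ℝ, (μ t x + Real.sqrt (hgradSq X (μ t) x))) ≤ Mμ)
    -- μ solves the adjoint Fokker–Planck equation
    (hFP : ∀ t ∈ Set.Ioo s τ, ∀ x,
        -deriv (fun r => μ r x) t - σ * hLap X (μ t) x
          - hdiv X (fun y i => γ * Real.sqrt (hgradSq X (u t) y) ^ (γ - 2)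
              * vderiv (X i) (u t) y * μ t y) x = 0) :
    (∫ x : Fin d → ℝ, u τ x * μ τ x)
      = (∫ x : Fin d → ℝ, u s x * μ s x)
        + (∫ t in Set.Ioc s τ, ∫ x : Fin d → ℝ,
            (γ - 1) * Real.sqrt (hgradSq X (u t) x) ^ γ * μ t x)
        + (∫ t in Set.Ioc s τ, ∫ x : Fin d → ℝ, F t x * μ t x) := by
  obtain ⟨η, hη⟩ := exists_isCutoffSequence hw (fun i => (hXsm i).continuous) hXhom
  exact hamiltonJacobi_fokkerPlanck_duality_general
    (fun i => (hXsm i).of_le (mod_cast le_top)) hXdivfree hη hγ hsτ.le hFcont ⟨MF, hFbd⟩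
    ⟨hucont, hux, hut, huxcont, hutcont⟩ ⟨Mu, fun t ht x => (hubd t ht x).1⟩
    (fun i => ⟨Mu, fun t ht x => (hubd t ht x).2.1 i⟩) hHJ
    ⟨hμcont, hμx, hμt, hμxcont, hμtcont⟩
    (by simpa only [abs_of_nonneg (hμpos _ _)] using hμint)
    (by simpa only [abs_of_nonneg (hμpos _ _)] using hμsup) hFP
end
end

section
/- Let σ > 0, γ ≥ 2 and T > 0. Let F : [0,T]×ℝ^d → ℝ and u₀ : ℝ^d → ℝ be bounded, and let u : [0,T]×ℝ^d → ℝ be continuous with u(0,·) = u₀ and with u(t,·) horizontally differentiable for t ∈ (0,T]. Assume the two duality properties: (H1) for every τ ∈ (0,T] and every μ_τ ∈ C_c^∞(ℝ^d) with μ_τ ≥ 0 and ∫ μ_τ dx = 1, there is a measurable μ : [0,τ]×ℝ^d → [0,∞) with ∫_{ℝ^d} μ(t,x) dx = 1 for every t ∈ [0,τ], with ∫_0^τ ∫_{ℝ^d} |∇_G u|^γ μ dx dt < ∞, and with ∫_{ℝ^d} u(τ,x) μ_τ(x) dx = ∫_{ℝ^d} u₀(x) μ(0,x) dx + ∫_0^τ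 ∫_{ℝ^d} F μ dx dt − ∫_0^τ ∫_{ℝ^d} |∇_G u|^γ μ dx dt; (H2) for every such τ and μ_τ there is a measurable ν : [0,τ]×ℝ^d → [0,∞) with ∫_{ℝ^d} ν(t,x) dx = 1 for every t, ∫_0^τ ∫_{ℝ^d} |∇_G u|^γ ν dx dt < ∞, and ∫_{ℝ^d} u(τ,x) μ_τ(x) dx = ∫_{ℝ^d} u₀(x) ν(0,x) dx + ∫_0^τ ∫_{ℝ^d} (γ−1) |∇_G u|^γ ν dx dt + ∫_0^τ ∫_{ℝ^d} F ν dx dt. Then for all (t,x) ∈ [0,T]×ℝ^d, |u(t,x)| ≤ ((γ+1)/(γ−1)) (‖u₀‖_∞ + T ‖F‖_∞). -/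
open MeasureTheory Set

noncomputable section

/-! Test the solution at time `t` against a smooth probability density `φ`. Apart from the gradient
term, the right-hand sides of both duality formulas are averages of `u₀` and `F` against probability
densities, hence are bounded by `Mu + t * MF`. The gradient term is a nonnegative quantity entering
(H1) with a minus sign and (H2) with a plus sign, so (H1) bounds `∫ u(t) φ` from above and (H2)
bounds it from below. Concentrating `φ` at a point turns this into a pointwise bound, with the
constant `1` in place of `(γ + 1) / (γ - 1)`. -/

section ProbabilityDensity

variable {α β : Type*} [MeasurableSpace α] [MeasurableSpace β] {μ : Measure α} {ν : Measure β}

/-- A probability density with respect to `μ`. Integrability is part of `integral_eq_one`, because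
the Bochner integral of a non-integrable function is `0`. -/
structure IsProbDensity (μ : Measure α) (ρ : α → ℝ) : Prop where
  nonneg : ∀ x, 0 ≤ ρ x
  integral_eq_one : ∫ x, ρ x ∂μ = 1

lemma IsProbDensity.abs_integral_mul_le {ρ : α → ℝ} (hρ : IsProbDensity μ ρ) {g : α → ℝ} {M : ℝ}
    (hg : ∀ x, |g x| ≤ M) : |∫ x, g x * ρ x ∂μ| ≤ M := by
  have hint : Integrable ρ μ := integrable_of_integral_eq_one hρ.integral_eq_one
  have hpt : ∀ x, ‖g x * ρ x‖ ≤ M * ρ x := fun x => by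
    rw [norm_mul, Real.norm_of_nonneg (hρ.nonneg x)]
    exact mul_le_mul_of_nonneg_right (hg x) (hρ.nonneg x)
  calc |∫ x, g x * ρ x ∂μ| ≤ ∫ x, M * ρ x ∂μ :=
        norm_integral_le_of_norm_le (hint.const_mul M) (.of_forall hpt)
    _ = M := by rw [integral_const_mul, hρ.integral_eq_one, mul_one]

lemma abs_setIntegral_integral_mul_le {s : Set β} (hs : ν s < ⊤) {F ρ : β → α → ℝ} {M : ℝ}
    (hρ : ∀ t ∈ s, IsProbDensity μ (ρ t)) (hF : ∀ t ∈ s, ∀ x, |F t x| ≤ M) :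
    |∫ t in s, ∫ x, F t x * ρ t x ∂μ ∂ν| ≤ M * ν.real s := by
  rw [← Real.norm_eq_abs]
  exact norm_setIntegral_le_of_norm_le_const hs fun t ht => (hρ t ht).abs_integral_mul_le (hF t ht)

lemma abs_integral_add_setIntegral_Ioc_le {τ : ℝ} (hτ : 0 ≤ τ) {ρ : ℝ → α → ℝ}
    (hρ : ∀ t ∈ Icc 0 τ, IsProbDensity μ (ρ t)) {g : α → ℝ} {A : ℝ} (hg : ∀ x, |g x| ≤ A)
    {F : ℝ → α → ℝ} {B : ℝ} (hF : ∀ t ∈ Ioc 0 τ, ∀ x, |F t x| ≤ B) :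
    |(∫ x, g x * ρ 0 x ∂μ) + ∫ t in Ioc 0 τ, ∫ x, F t x * ρ t x ∂μ| ≤ A + τ * B := by
  have hinit : |∫ x, g x * ρ 0 x ∂μ| ≤ A :=
    (hρ 0 (left_mem_Icc.2 hτ)).abs_integral_mul_le hg
  have hsource : |∫ t in Ioc 0 τ, ∫ x, F t x * ρ t x ∂μ| ≤ B * volume.real (Ioc 0 τ) :=
    abs_setIntegral_integral_mul_le measure_Ioc_lt_top
      (fun t ht => hρ t (Ioc_subset_Icc_self ht)) hF
  rw [Real.volume_real_Ioc_of_le hτ, sub_zero, mul_comm] at hsource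
  exact (abs_add_le _ _).trans (add_le_add hinit hsource)

end ProbabilityDensity

section TestDensity

open Filter Topology
open scoped Convolution

variable {E : Type*} [NormedAddCommGroup E] [NormedSpace ℝ E] [MeasurableSpace E]
  {μ : Measure E}

/-- A smooth, compactly supported probability density: the terminal datum of the adjoint
Fokker–Planck equation in the duality formulas. -/
structure IsTestDensity (μ : Measure E) (φ : E → ℝ) : Prop extends IsProbDensity μ φ where
  contDiff : ContDiff ℝ (⊤ : ℕ∞) φ
  hasCompactSupport : HasCompactSupport φ

variable [FiniteDimensional ℝ E] [BorelSpace E] [μ.IsAddHaarMeasure]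

lemma isTestDensity_normed_comp_sub (b : ContDiffBump (0 : E)) (x : E) :
    IsTestDensity μ fun y => b.normed μ (x - y) where
  nonneg _ := b.nonneg_normed _
  integral_eq_one := by rw [integral_sub_left_eq_self (b.normed μ) μ x, b.integral_normed]
  contDiff := b.contDiff_normed.comp (contDiff_const.sub contDiff_id)
  hasCompactSupport := b.hasCompactSupport_normed.comp_homeomorph (Homeomorph.subLeft x)

lemma mem_of_forall_isTestDensity_integral_smul_mem {V : Type*} [NormedAddCommGroup V]
    [NormedSpace ℝ V] [CompleteSpace V] {v : E → V} (hv : Continuous v) {K : Set V}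
    (hK : IsClosed K) (h : ∀ φ, IsTestDensity μ φ → ∫ y, φ y • v y ∂μ ∈ K) (x : E) :
    v x ∈ K := by
  let b : ℕ → ContDiffBump (0 : E) := fun n =>
    ⟨1 / (n + 1 : ℝ) / 2, 1 / (n + 1 : ℝ), by positivity, half_lt_self (by positivity)⟩
  have hlim : Tendsto (fun n => ((b n).normed μ ⋆[.lsmul ℝ ℝ, μ] v) x) atTop (𝓝 (v x)) :=
    ContDiffBump.convolution_tendsto_right_of_continuous
      tendsto_one_div_add_atTop_nhds_zero_nat hv x
  refine hK.mem_of_tendsto hlim (.of_forall fun n => ?_)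
  rw [convolution_lsmul_swap]
  exact h _ (isTestDensity_normed_comp_sub (b n) x)

lemma abs_le_of_forall_isTestDensity_abs_integral_mul_le {v : E → ℝ} (hv : Continuous v) {C : ℝ}
    (h : ∀ φ, IsTestDensity μ φ → |∫ y, v y * φ y ∂μ| ≤ C) (x : E) : |v x| ≤ C :=
  abs_le.2 <| mem_of_forall_isTestDensity_integral_smul_mem hv isClosed_Icc
    (fun φ hφ => by simpa only [smul_eq_mul, mul_comm, mem_Icc, ← abs_le] using h φ hφ) x

end TestDensity

lemma add_mul_le_add_one_div_sub_one_mul {γ A B t T : ℝ} (hγ : 1 < γ) (hA : 0 ≤ A) (hB : 0 ≤ B)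
    (ht : 0 ≤ t) (htT : t ≤ T) : A + t * B ≤ (γ + 1) / (γ - 1) * (A + T * B) := by
  have hfactor : 1 ≤ (γ + 1) / (γ - 1) := (one_le_div (sub_pos.2 hγ)).2 (by linarith)
  calc A + t * B ≤ A + T * B := by gcongr
    _ ≤ (γ + 1) / (γ - 1) * (A + T * B) :=
        le_mul_of_one_le_left (add_nonneg hA (mul_nonneg (ht.trans htT) hB)) hfactor

theorem hamiltonJacobi_linfty_bound_general {d m : ℕ}
    (X : Fin m → (Fin d → ℝ) → (Fin d → ℝ)) (γ T : ℝ) (hγ : 1 ≤ γ)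
    (F : ℝ → (Fin d → ℝ) → ℝ) (MF : ℝ) (hMF : ∀ t ∈ Set.Icc (0 : ℝ) T, ∀ x, |F t x| ≤ MF)
    (u₀ : (Fin d → ℝ) → ℝ) (Mu : ℝ) (hMu : ∀ x, |u₀ x| ≤ Mu)
    (u : ℝ → (Fin d → ℝ) → ℝ) (huinit : ∀ x, u 0 x = u₀ x)
    (hudiff : ∀ t ∈ Set.Ioc (0 : ℝ) T, ∀ x, DifferentiableAt ℝ (u t) x)
    (H1 : ∀ τ ∈ Set.Ioc (0 : ℝ) T, ∀ μτ : (Fin d → ℝ) → ℝ,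
        ContDiff ℝ (⊤ : ℕ∞) μτ → HasCompactSupport μτ → (∀ x, 0 ≤ μτ x) →
        (∫ x : Fin d → ℝ, μτ x) = 1 →
        ∃ μ : ℝ → (Fin d → ℝ) → ℝ,
          Measurable (Function.uncurry μ) ∧ (∀ t x, 0 ≤ μ t x) ∧
          (∀ t ∈ Set.Icc (0 : ℝ) τ, (∫ x : Fin d → ℝ, μ t x) = 1) ∧
          MeasureTheory.IntegrableOn
            (fun p : ℝ × (Fin d → ℝ) => Real.sqrt (hgradSq X (u p.1) p.2) ^ γ * μ p.1 p.2)
            (Set.Ioc 0 τ ×ˢ Set.univ) ∧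
          (∫ x : Fin d → ℝ, u τ x * μτ x)
            = (∫ x : Fin d → ℝ, u₀ x * μ 0 x)
              + (∫ t in Set.Ioc (0 : ℝ) τ, ∫ x : Fin d → ℝ, F t x * μ t x)
              - (∫ t in Set.Ioc (0 : ℝ) τ, ∫ x : Fin d → ℝ,
                  Real.sqrt (hgradSq X (u t) x) ^ γ * μ t x))
    (H2 : ∀ τ ∈ Set.Ioc (0 : ℝ) T, ∀ μτ : (Fin d → ℝ) → ℝ,
        ContDiff ℝ (⊤ : ℕ∞) μτ → HasCompactSupport μτ → (∀ x, 0 ≤ μτ x) →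
        (∫ x : Fin d → ℝ, μτ x) = 1 →
        ∃ ν : ℝ → (Fin d → ℝ) → ℝ,
          Measurable (Function.uncurry ν) ∧ (∀ t x, 0 ≤ ν t x) ∧
          (∀ t ∈ Set.Icc (0 : ℝ) τ, (∫ x : Fin d → ℝ, ν t x) = 1) ∧
          MeasureTheory.IntegrableOn
            (fun p : ℝ × (Fin d → ℝ) => Real.sqrt (hgradSq X (u p.1) p.2) ^ γ * ν p.1 p.2)
            (Set.Ioc 0 τ ×ˢ Set.univ) ∧
          (∫ x : Fin d → ℝ, u τ x * μτ x)
            = (∫ x : Fin d → ℝ, u₀ x * ν 0 x)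
              + (∫ t in Set.Ioc (0 : ℝ) τ, ∫ x : Fin d → ℝ,
                  (γ - 1) * Real.sqrt (hgradSq X (u t) x) ^ γ * ν t x)
              + (∫ t in Set.Ioc (0 : ℝ) τ, ∫ x : Fin d → ℝ, F t x * ν t x)) :
    ∀ t ∈ Set.Icc (0 : ℝ) T, ∀ x, |u t x| ≤ Mu + t * MF := by
  rintro t ⟨ht0, htT⟩ x
  rcases ht0.eq_or_lt with rfl | htpos
  · simpa only [huinit, zero_mul, add_zero] using hMu x
  have ht : t ∈ Ioc 0 T := ⟨htpos, htT⟩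
  have hcont : Continuous (u t) :=
    continuous_iff_continuousAt.2 fun y => (hudiff t ht y).continuousAt
  have hdata {ρ : ℝ → (Fin d → ℝ) → ℝ} (h0 : ∀ s y, 0 ≤ ρ s y)
      (h1 : ∀ s ∈ Icc 0 t, ∫ y, ρ s y = 1) :=
    abs_le.1 <| abs_integral_add_setIntegral_Ioc_le ht0 (fun s hs => ⟨h0 s, h1 s hs⟩) hMu
      fun s hs => hMF s ⟨hs.1.le, hs.2.trans htT⟩
  refine abs_le_of_forall_isTestDensity_abs_integral_mul_le (μ := volume) hcont
    (fun φ hφ => abs_le.2 ⟨?_, ?_⟩) x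
  · obtain ⟨ν, -, hν0, hν1, -, hν⟩ :=
      H2 t ht φ hφ.contDiff hφ.hasCompactSupport hφ.nonneg hφ.integral_eq_one
    have hgrad : 0 ≤ ∫ s in Ioc 0 t, ∫ y, (γ - 1) * √(hgradSq X (u s) y) ^ γ * ν s y :=
      integral_nonneg fun s => integral_nonneg fun y =>
        mul_nonneg (mul_nonneg (sub_nonneg.2 hγ) (by positivity)) (hν0 s y)
    linarith [hdata hν0 hν1]
  · obtain ⟨μ, -, hμ0, hμ1, -, hμ⟩ :=
      H1 t ht φ hφ.contDiff hφ.hasCompactSupport hφ.nonneg hφ.integral_eq_one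
    have hgrad : 0 ≤ ∫ s in Ioc 0 t, ∫ y, √(hgradSq X (u s) y) ^ γ * μ s y :=
      integral_nonneg fun s => integral_nonneg fun y => mul_nonneg (by positivity) (hμ0 s y)
    linarith [hdata hμ0 hμ1]

/-- `L^∞` bound for a solution of the Hamilton–Jacobi equation via the two
duality properties (H1) and (H2) with solutions of the adjoint Fokker–Planck equation:
`|u(t,x)| ≤ ((γ+1)/(γ−1)) (‖u₀‖_∞ + T ‖F‖_∞)`. -/
theorem hamiltonJacobi_linfty_bound {d m : ℕ} (hd : 0 < d) (hm : 0 < m)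
    (X : Fin m → (Fin d → ℝ) → (Fin d → ℝ)) (hXsm : ∀ i, ContDiff ℝ (⊤ : ℕ∞) (X i))
    (σ γ T : ℝ) (hσ : 0 < σ) (hγ : 2 ≤ γ) (hT : 0 < T)
    (F : ℝ → (Fin d → ℝ) → ℝ) (MF : ℝ) (hMF : ∀ t ∈ Set.Icc (0:ℝ) T, ∀ x, |F t x| ≤ MF)
    (u₀ : (Fin d → ℝ) → ℝ) (Mu : ℝ) (hMu : ∀ x, |u₀ x| ≤ Mu)
    (u : ℝ → (Fin d → ℝ) → ℝ)
    (hucont : ContinuousOn (fun p : ℝ × (Fin d → ℝ) => u p.1 p.2) (Set.Icc 0 T ×ˢ Set.univ))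
    (huinit : ∀ x, u 0 x = u₀ x)
    (hudiff : ∀ t ∈ Set.Ioc (0:ℝ) T, ∀ x, DifferentiableAt ℝ (u t) x)
    -- duality property (H1)
    (H1 : ∀ τ ∈ Set.Ioc (0:ℝ) T, ∀ μτ : (Fin d → ℝ) → ℝ,
        ContDiff ℝ (⊤ : ℕ∞) μτ → HasCompactSupport μτ → (∀ x, 0 ≤ μτ x) →
        (∫ x : Fin d → ℝ, μτ x) = 1 →
        ∃ μ : ℝ → (Fin d → ℝ) → ℝ,
          Measurable (Function.uncurry μ) ∧ (∀ t x, 0 ≤ μ t x) ∧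
          (∀ t ∈ Set.Icc (0:ℝ) τ, (∫ x : Fin d → ℝ, μ t x) = 1) ∧
          MeasureTheory.IntegrableOn
            (fun p : ℝ × (Fin d → ℝ) => Real.sqrt (hgradSq X (u p.1) p.2) ^ γ * μ p.1 p.2)
            (Set.Ioc 0 τ ×ˢ Set.univ) ∧
          (∫ x : Fin d → ℝ, u τ x * μτ x)
            = (∫ x : Fin d → ℝ, u₀ x * μ 0 x)
              + (∫ t in Set.Ioc (0:ℝ) τ, ∫ x : Fin d → ℝ, F t x * μ t x)
              - (∫ t in Set.Ioc (0:ℝ) τ, ∫ x : Fin d → ℝ,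
                  Real.sqrt (hgradSq X (u t) x) ^ γ * μ t x))
    -- duality property (H2)
    (H2 : ∀ τ ∈ Set.Ioc (0:ℝ) T, ∀ μτ : (Fin d → ℝ) → ℝ,
        ContDiff ℝ (⊤ : ℕ∞) μτ → HasCompactSupport μτ → (∀ x, 0 ≤ μτ x) →
        (∫ x : Fin d → ℝ, μτ x) = 1 →
        ∃ ν : ℝ → (Fin d → ℝ) → ℝ,
          Measurable (Function.uncurry ν) ∧ (∀ t x, 0 ≤ ν t x) ∧
          (∀ t ∈ Set.Icc (0:ℝ) τ, (∫ x : Fin d → ℝ, ν t x) = 1) ∧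
          MeasureTheory.IntegrableOn
            (fun p : ℝ × (Fin d → ℝ) => Real.sqrt (hgradSq X (u p.1) p.2) ^ γ * ν p.1 p.2)
            (Set.Ioc 0 τ ×ˢ Set.univ) ∧
          (∫ x : Fin d → ℝ, u τ x * μτ x)
            = (∫ x : Fin d → ℝ, u₀ x * ν 0 x)
              + (∫ t in Set.Ioc (0:ℝ) τ, ∫ x : Fin d → ℝ,
                  (γ - 1) * Real.sqrt (hgradSq X (u t) x) ^ γ * ν t x)
              + (∫ t in Set.Ioc (0:ℝ) τ, ∫ x : Fin d → ℝ, F t x * ν t x)) :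
    ∀ t ∈ Set.Icc (0:ℝ) T, ∀ x, |u t x| ≤ (γ + 1) / (γ - 1) * (Mu + T * MF) := by
  intro t ht x
  exact (hamiltonJacobi_linfty_bound_general X γ T (one_le_two.trans hγ) F MF hMF u₀ Mu hMu u huinit
    hudiff H1 H2 t ht x).trans <|
    add_mul_le_add_one_div_sub_one_mul (one_lt_two.trans_le hγ) ((abs_nonneg _).trans (hMu x))
      ((abs_nonneg _).trans (hMF t ht x)) ht.1 ht.2
end
end

section
/- Let σ > 0, γ ≥ 2 and T > 0, and let Y be a smooth vector field on ℝ^d with [X_i, Y] = 0 for every i = 1, …, m. Let F : (0,T)×ℝ^d → ℝ be differentiable in x, and let u : (0,T)×ℝ^d → ℝ be C² jointly in (t,x) and three times continuously differentiable in x, with all spatial derivatives up to order three continuous in (t,x), satisfying ∂_t u − σ Δ_G u + |∇_G u|^γ = F pointwise on (0,T)×ℝ^d. Then the function v := Yu, i.e. v(t,x) := D_x u(t,x)[Y(x)], satisfies the linearized equation ∂_t v − σ Δ_G v + γ |∇_G u|^{γ−2} ∇_G u · ∇_G v = YF pointwise on (0,T)×ℝ^d, where YF(t,x) := D_x F(t,x)[Y(x)].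 -/
open MeasureTheory Set

noncomputable section

/-!
A field `Y` commuting with the `X_i` passes through `X_i X_i` and `∇_G`, and it passes through `∂_t`
by symmetry of the second derivative on space-time. Applying `Y` to the equation at a fixed time
therefore only requires the chain rule for the nonlinear term: the derivative of `p ↦ |p|^γ` in the
direction `q` is `γ |p|^(γ-2) ⟪p, q⟫`.
-/

section LieDerivative

open VectorField

variable {𝕜 E G : Type*} [NontriviallyNormedField 𝕜] [NormedAddCommGroup E] [NormedSpace 𝕜 E]
  [NormedAddCommGroup G] [NormedSpace 𝕜 G] {X Y : E → E} {f : E → G} {x : E}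

variable (𝕜) in
/-- The derivative `X f` of a vector-valued function `f` along a vector field `X` on a normed space;
for `E = ℝ^d` and `G = ℝ` it is definitionally `vderiv X f`. -/
def lieDeriv (X : E → E) (f : E → G) (x : E) : G :=
  fderiv 𝕜 f x (X x)

lemma contDiffAt_lieDeriv {n : WithTop ℕ∞} (hX : ContDiffAt 𝕜 n X x)
    (hf : ContDiffAt 𝕜 (n + 1) f x) : ContDiffAt 𝕜 n (lieDeriv 𝕜 X f) x :=
  hf.fderiv_right_succ.clm_apply hX

lemma differentiableAt_lieDeriv (hX : DifferentiableAt 𝕜 X x) (hf : ContDiffAt 𝕜 2 f x) :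
    DifferentiableAt 𝕜 (lieDeriv 𝕜 X f) x :=
  ((hf.fderiv_right (m := 1) (by norm_num)).differentiableAt one_ne_zero).clm_apply hX

lemma lieDeriv_comm_of_lieBracket_eq_zero {n : WithTop ℕ∞} (hf : ContDiffAt 𝕜 n f x)
    (hn : minSmoothness 𝕜 2 ≤ n) (hX : DifferentiableAt 𝕜 X x) (hY : DifferentiableAt 𝕜 Y x)
    (hXY : lieBracket 𝕜 X Y x = 0) :
    lieDeriv 𝕜 X (lieDeriv 𝕜 Y f) x = lieDeriv 𝕜 Y (lieDeriv 𝕜 X f) x := by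
  have h := fderiv_apply_lieBracket hf hn hY hX
  rw [hXY, map_zero] at h
  exact sub_eq_zero.mp h.symm

end LieDerivative

section MixedPartials

open Filter VectorField
open scoped Topology

variable {𝕜 E F G : Type*} [NontriviallyNormedField 𝕜] [NormedAddCommGroup E] [NormedSpace 𝕜 E]
  [NormedAddCommGroup F] [NormedSpace 𝕜 F] [NormedAddCommGroup G] [NormedSpace 𝕜 G]
  {f : E → F → G} {x : E} {y : F}

lemma fderiv_partial_left_apply (hf : DifferentiableAt 𝕜 (Function.uncurry f) (x, y)) (v : E) :
    fderiv 𝕜 (fun x' => f x' y) x v = fderiv 𝕜 (Function.uncurry f) (x, y) (v, 0) := by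
  have h := hf.hasFDerivAt.comp (f := fun x' => (x', y)) x (hasFDerivAt_prodMk_left x y)
  simpa [Function.comp_def] using DFunLike.congr_fun h.fderiv v

lemma fderiv_partial_right_apply (hf : DifferentiableAt 𝕜 (Function.uncurry f) (x, y)) (w : F) :
    fderiv 𝕜 (f x) y w = fderiv 𝕜 (Function.uncurry f) (x, y) (0, w) := by
  have h := hf.hasFDerivAt.comp y (hasFDerivAt_prodMk_right x y)
  simpa [Function.comp_def] using DFunLike.congr_fun h.fderiv w

lemma eventuallyEq_fderiv_partial_left_apply (hf : ContDiffAt 𝕜 1 (Function.uncurry f) (x, y))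
    (v : E) :
    (fun y' => fderiv 𝕜 (fun x' => f x' y') x v) =ᶠ[𝓝 y]
      fun y' => lieDeriv 𝕜 (fun _ => (v, 0)) (Function.uncurry f) (x, y') := by
  have h : Tendsto (fun y' => (x, y')) (𝓝 y) (𝓝 (x, y)) := (Continuous.prodMk_right x).tendsto y
  filter_upwards [h.eventually (hf.eventually (by simp))] with y' hy'
  exact fderiv_partial_left_apply (hy'.differentiableAt one_ne_zero) v

lemma eventuallyEq_fderiv_partial_right_apply (hf : ContDiffAt 𝕜 1 (Function.uncurry f) (x, y))
    (w : F) :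
    (fun x' => fderiv 𝕜 (f x') y w) =ᶠ[𝓝 x]
      fun x' => lieDeriv 𝕜 (fun _ => (0, w)) (Function.uncurry f) (x', y) := by
  have h : Tendsto (fun x' => (x', y)) (𝓝 x) (𝓝 (x, y)) := (Continuous.prodMk_left y).tendsto x
  filter_upwards [h.eventually (hf.eventually (by simp))] with x' hx'
  exact fderiv_partial_right_apply (hx'.differentiableAt one_ne_zero) w

lemma differentiableAt_fderiv_partial_left_apply
    (hf : ContDiffAt 𝕜 2 (Function.uncurry f) (x, y)) (v : E) :
    DifferentiableAt 𝕜 (fun y' => fderiv 𝕜 (fun x' => f x' y') x v) y := by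
  have h := differentiableAt_lieDeriv (X := fun _ => (v, (0 : F))) (by fun_prop) hf
  exact (h.comp y (hasFDerivAt_prodMk_right x y).differentiableAt).congr_of_eventuallyEq
    (eventuallyEq_fderiv_partial_left_apply (hf.of_le one_le_two) v)

lemma fderiv_partial_comm {n : WithTop ℕ∞} (hf : ContDiffAt 𝕜 n (Function.uncurry f) (x, y))
    (hn : minSmoothness 𝕜 2 ≤ n) (v : E) (w : F) :
    fderiv 𝕜 (fun x' => fderiv 𝕜 (f x') y w) x v =
      fderiv 𝕜 (fun y' => fderiv 𝕜 (fun x' => f x' y') x v) y w := by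
  have hf₂ : ContDiffAt 𝕜 2 (Function.uncurry f) (x, y) := hf.of_le (le_minSmoothness.trans hn)
  have hf₁ : ContDiffAt 𝕜 1 (Function.uncurry f) (x, y) := hf₂.of_le one_le_two
  have hdiff (z : E × F) :
      DifferentiableAt 𝕜 (lieDeriv 𝕜 (fun _ => z) (Function.uncurry f)) (x, y) :=
    differentiableAt_lieDeriv (by fun_prop) hf₂
  rw [(eventuallyEq_fderiv_partial_right_apply hf₁ w).fderiv_eq,
    (eventuallyEq_fderiv_partial_left_apply hf₁ v).fderiv_eq,
    fderiv_partial_left_apply (f := fun x' y' => lieDeriv 𝕜 _ _ (x', y')) (hdiff _),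
    fderiv_partial_right_apply (f := fun x' y' => lieDeriv 𝕜 _ _ (x', y')) (hdiff _)]
  exact lieDeriv_comm_of_lieBracket_eq_zero (X := fun _ => (v, 0)) (Y := fun _ => (0, w)) hf hn
    (by fun_prop) (by fun_prop) (by simp [lieBracket])

end MixedPartials

section HorizontalCalculus

open Filter VectorField
open scoped Topology

variable {E G ι : Type*} [NormedAddCommGroup E] [NormedSpace ℝ E] [NormedAddCommGroup G]
  [NormedSpace ℝ G] {X : ι → E → E} {Y : E → E} {x : E}

/-- The horizontal gradient `∇_G f = (X_i f)_i` of a finite family of vector fields, with values in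
Euclidean space so that `‖∇_G f‖` is the Euclidean norm. -/
def horizontalGrad (X : ι → E → E) (f : E → ℝ) (x : E) : EuclideanSpace ℝ ι :=
  WithLp.toLp 2 fun i => lieDeriv ℝ (X i) f x

lemma differentiableAt_horizontalGrad [Finite ι] {f : E → ℝ} (hX : ∀ i, Differentiable ℝ (X i))
    (hf : ContDiffAt ℝ 2 f x) : DifferentiableAt ℝ (horizontalGrad X f) x :=
  differentiableAt_euclidean.mpr fun i => differentiableAt_lieDeriv (hX i x) hf

variable [Fintype ι]

/-- The horizontal Laplacian `Δ_G f = ∑ X_i (X_i f)` of a finite family of vector fields on a normed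
space; for `E = ℝ^d` it is definitionally `hLap X f`. -/
def horizontalLaplacian (X : ι → E → E) (f : E → G) (x : E) : G :=
  ∑ i, lieDeriv ℝ (X i) (lieDeriv ℝ (X i) f) x

lemma differentiableAt_horizontalLaplacian {f : E → G} (hX : ∀ i, ContDiff ℝ 2 (X i))
    (hf : ContDiffAt ℝ 3 f x) : DifferentiableAt ℝ (horizontalLaplacian X f) x :=
  DifferentiableAt.fun_sum fun i _ =>
    differentiableAt_lieDeriv ((hX i).differentiable two_ne_zero x)
      (contDiffAt_lieDeriv (hX i).contDiffAt (by norm_num [hf]))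

lemma lieDeriv_horizontalLaplacian_of_lieBracket_eq_zero {f : E → G}
    (hX : ∀ i, ContDiff ℝ 2 (X i)) (hY : Differentiable ℝ Y)
    (hXY : ∀ i, lieBracket ℝ (X i) Y = 0) (hf : ContDiffAt ℝ 3 f x) :
    lieDeriv ℝ Y (horizontalLaplacian X f) x = horizontalLaplacian X (lieDeriv ℝ Y f) x := by
  have hXd (i : ι) : Differentiable ℝ (X i) := (hX i).differentiable two_ne_zero
  have hXf (i : ι) : ContDiffAt ℝ 2 (lieDeriv ℝ (X i) f) x :=
    contDiffAt_lieDeriv (hX i).contDiffAt (by norm_num [hf])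
  have hcomm (i : ι) : lieDeriv ℝ (X i) (lieDeriv ℝ Y f) =ᶠ[𝓝 x]
      lieDeriv ℝ Y (lieDeriv ℝ (X i) f) := by
    filter_upwards [hf.eventually (by simp)] with y hy
    exact lieDeriv_comm_of_lieBracket_eq_zero hy (by norm_num) (hXd i y) (hY y)
      (congrFun (hXY i) y)
  calc lieDeriv ℝ Y (horizontalLaplacian X f) x
      = ∑ i, lieDeriv ℝ Y (lieDeriv ℝ (X i) (lieDeriv ℝ (X i) f)) x := by
        have h : HasFDerivAt (horizontalLaplacian X f) _ x := HasFDerivAt.fun_sum fun i _ =>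
          (differentiableAt_lieDeriv (hXd i x) (hXf i)).hasFDerivAt
        simp [lieDeriv, h.fderiv]
    _ = ∑ i, lieDeriv ℝ (X i) (lieDeriv ℝ Y (lieDeriv ℝ (X i) f)) x :=
        Finset.sum_congr rfl fun i _ => (lieDeriv_comm_of_lieBracket_eq_zero (hXf i) (by simp)
          (hXd i x) (hY x) (congrFun (hXY i) x)).symm
    _ = horizontalLaplacian X (lieDeriv ℝ Y f) x :=
        Finset.sum_congr rfl fun i _ => DFunLike.congr_fun (hcomm i).fderiv_eq.symm (X i x)

lemma lieDeriv_horizontalGrad_of_lieBracket_eq_zero {f : E → ℝ}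
    (hX : ∀ i, Differentiable ℝ (X i)) (hY : DifferentiableAt ℝ Y x)
    (hXY : ∀ i, lieBracket ℝ (X i) Y x = 0) (hf : ContDiffAt ℝ 2 f x) :
    lieDeriv ℝ Y (horizontalGrad X f) x = horizontalGrad X (lieDeriv ℝ Y f) x := by
  ext i
  have h := (EuclideanSpace.proj (𝕜 := ℝ) i).hasFDerivAt.comp x
    (differentiableAt_horizontalGrad hX hf).hasFDerivAt
  calc lieDeriv ℝ Y (horizontalGrad X f) x i
      = lieDeriv ℝ Y (lieDeriv ℝ (X i) f) x := (DFunLike.congr_fun h.fderiv (Y x)).symm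
    _ = lieDeriv ℝ (X i) (lieDeriv ℝ Y f) x :=
        (lieDeriv_comm_of_lieBracket_eq_zero hf (by simp) (hX i x) hY (hXY i)).symm

end HorizontalCalculus

section HamiltonJacobi

open Filter VectorField
open scoped Topology

variable {E ι : Type*} [NormedAddCommGroup E] [NormedSpace ℝ E] [Fintype ι] {X : ι → E → E}
  {Y : E → E} {u : ℝ → E → ℝ} {σ : ℝ}

theorem lieDeriv_viscous_hamiltonJacobi {H : EuclideanSpace ℝ ι → ℝ} {f : E → ℝ} {t : ℝ} {x : E}
    (hX : ∀ i, ContDiff ℝ 2 (X i)) (hY : Differentiable ℝ Y)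
    (hXY : ∀ i, lieBracket ℝ (X i) Y = 0)
    (hu : ContDiffAt ℝ 2 (Function.uncurry u) (t, x)) (hut : ContDiffAt ℝ 3 (u t) x)
    (hH : DifferentiableAt ℝ H (horizontalGrad X (u t) x))
    (hPDE : ∀ᶠ y in 𝓝 x, deriv (fun s => u s y) t - σ * horizontalLaplacian X (u t) y
      + H (horizontalGrad X (u t) y) = f y) :
    deriv (fun s => lieDeriv ℝ Y (u s) x) t
      - σ * horizontalLaplacian X (lieDeriv ℝ Y (u t)) x
      + fderiv ℝ H (horizontalGrad X (u t) x) (horizontalGrad X (lieDeriv ℝ Y (u t)) x)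
      = lieDeriv ℝ Y f x := by
  have hXd (i : ι) : Differentiable ℝ (X i) := (hX i).differentiable two_ne_zero
  have hut₂ : ContDiffAt ℝ 2 (u t) x := hut.of_le (by norm_num)
  have htime : DifferentiableAt ℝ (fun y => deriv (fun s => u s y) t) x :=
    differentiableAt_fderiv_partial_left_apply hu 1
  have hlap := differentiableAt_horizontalLaplacian hX hut
  have hgrad := differentiableAt_horizontalGrad hXd hut₂
  have hsum := ((htime.hasFDerivAt.sub (hlap.hasFDerivAt.const_mul σ)).add
    (hH.hasFDerivAt.comp x hgrad.hasFDerivAt)).congr_of_eventuallyEq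
      (hPDE.mono fun y hy => hy.symm)
  have htimeY : deriv (fun s => lieDeriv ℝ Y (u s) x) t
      = lieDeriv ℝ Y (fun y => deriv (fun s => u s y) t) x :=
    fderiv_partial_comm hu (by simp) 1 (Y x)
  rw [htimeY, ← lieDeriv_horizontalLaplacian_of_lieBracket_eq_zero hX hY hXY hut,
    ← lieDeriv_horizontalGrad_of_lieBracket_eq_zero hXd (hY x) (fun i => congrFun (hXY i) x) hut₂]
  simp [lieDeriv, hsum.fderiv]

-- For `γ < 2` and `∇_G u = 0`, the factor `‖∇_G u‖ ^ (γ - 2)` is a junk value, but it multiplies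
-- the zero inner product, in accordance with the differential of `‖·‖ ^ γ` at the origin.
theorem bernstein_commuting_field_equation_general {Q : Set (ℝ × E)} (hQ : IsOpen Q)
    (hX : ∀ i, ContDiff ℝ 2 (X i)) (hY : Differentiable ℝ Y)
    (hXY : ∀ i, lieBracket ℝ (X i) Y = 0) {γ : ℝ} (hγ : 1 < γ) {F : ℝ → E → ℝ}
    (hu : ContDiffOn ℝ 2 (Function.uncurry u) Q)
    (hu₃ : ∀ t x, (t, x) ∈ Q → ContDiffAt ℝ 3 (u t) x)
    (hPDE : ∀ t x, (t, x) ∈ Q → deriv (fun s => u s x) t - σ * horizontalLaplacian X (u t) x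
      + ‖horizontalGrad X (u t) x‖ ^ γ = F t x) {t : ℝ} {x : E} (htx : (t, x) ∈ Q) :
    deriv (fun s => lieDeriv ℝ Y (u s) x) t
      - σ * horizontalLaplacian X (lieDeriv ℝ Y (u t)) x
      + γ * ‖horizontalGrad X (u t) x‖ ^ (γ - 2)
        * inner ℝ (horizontalGrad X (u t) x) (horizontalGrad X (lieDeriv ℝ Y (u t)) x)
      = lieDeriv ℝ Y (F t) x := by
  have hQx : ∀ᶠ y in 𝓝 x, (t, y) ∈ Q :=
    (Continuous.prodMk_right t).continuousAt.eventually_mem (hQ.mem_nhds htx)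
  have h := lieDeriv_viscous_hamiltonJacobi hX hY hXY (hu.contDiffAt (hQ.mem_nhds htx))
    (hu₃ t x htx) (differentiable_norm_rpow hγ _) (hQx.mono (hPDE t))
  simpa [fderiv_norm_rpow _ hγ] using h

end HamiltonJacobi

section Coordinates

variable {d m : ℕ} (X : Fin m → (Fin d → ℝ) → (Fin d → ℝ)) (f g : (Fin d → ℝ) → ℝ)
  (x : Fin d → ℝ)

lemma sqrt_hgradSq_eq_norm : √(hgradSq X f x) = ‖horizontalGrad X f x‖ := by
  simp [EuclideanSpace.norm_eq, hgradSq, horizontalGrad, vderiv, lieDeriv]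

lemma sum_vderiv_mul_vderiv_eq_inner :
    ∑ i, vderiv (X i) f x * vderiv (X i) g x
      = inner ℝ (horizontalGrad X f x) (horizontalGrad X g x) := by
  simp [PiLp.inner_apply, horizontalGrad, vderiv, lieDeriv, mul_comm]

end Coordinates

/-- If `Y` commutes with all the horizontal fields `X_i` and `u` solves the
Hamilton–Jacobi equation `∂_t u − σ Δ_G u + |∇_G u|^γ = F`, then `v = Yu` solves the
linearized equation `∂_t v − σ Δ_G v + γ |∇_G u|^{γ−2} ∇_G u · ∇_G v = YF`. -/
theorem bernstein_commuting_field_equation {d m : ℕ} (hd : 0 < d) (hm : 0 < m)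
    (X : Fin m → (Fin d → ℝ) → (Fin d → ℝ)) (hXsm : ∀ i, ContDiff ℝ (⊤ : ℕ∞) (X i))
    (Y : (Fin d → ℝ) → (Fin d → ℝ)) (hYsm : ContDiff ℝ (⊤ : ℕ∞) Y)
    (hcomm : ∀ i (x : Fin d → ℝ), fderiv ℝ Y x (X i x) - fderiv ℝ (X i) x (Y x) = 0)
    (σ γ T : ℝ) (hσ : 0 < σ) (hγ : 2 ≤ γ) (hT : 0 < T)
    (F : ℝ → (Fin d → ℝ) → ℝ)
    (hF : ∀ t ∈ Set.Ioo (0:ℝ) T, ∀ x, DifferentiableAt ℝ (F t) x)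
    (u : ℝ → (Fin d → ℝ) → ℝ)
    (huC2 : ContDiffOn ℝ 2 (fun p : ℝ × (Fin d → ℝ) => u p.1 p.2) (Set.Ioo 0 T ×ˢ Set.univ))
    (huC3 : ∀ t ∈ Set.Ioo (0:ℝ) T, ContDiff ℝ 3 (u t))
    (huDcont : ∀ k : ℕ, k ≤ 3 → ContinuousOn
        (fun p : ℝ × (Fin d → ℝ) => iteratedFDeriv ℝ k (u p.1) p.2)
        (Set.Ioo 0 T ×ˢ Set.univ))
    (hPDE : ∀ t ∈ Set.Ioo (0:ℝ) T, ∀ x,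
        deriv (fun r => u r x) t - σ * hLap X (u t) x
          + Real.sqrt (hgradSq X (u t) x) ^ γ = F t x) :
    ∀ t ∈ Set.Ioo (0:ℝ) T, ∀ x,
      deriv (fun r => vderiv Y (u r) x) t
        - σ * hLap X (fun y => vderiv Y (u t) y) x
        + γ * Real.sqrt (hgradSq X (u t) x) ^ (γ - 2)
            * (∑ i, vderiv (X i) (u t) x * vderiv (X i) (fun y => vderiv Y (u t) y) x)
        = vderiv Y (F t) x := by
  simp only [sqrt_hgradSq_eq_norm, sum_vderiv_mul_vderiv_eq_inner] at hPDE ⊢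
  exact fun t ht x => bernstein_commuting_field_equation_general (isOpen_Ioo.prod isOpen_univ)
    (fun i => (hXsm i).of_le (WithTop.coe_le_coe.mpr le_top)) (hYsm.differentiable (by simp))
    (fun i => funext (hcomm i)) (by linarith) huC2 (fun t x h => (huC3 t h.1).contDiffAt)
    (fun t x h => hPDE t h.1 x) ⟨ht, mem_univ x⟩
end
end
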